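/- arXiv:2004.02520 — 2 statements merged into one kernel-verified Lean document; each statement's English description precedes it below -/
import Mathlib

section
/- (Abstract coarea inequality) Let (X,d_X), (Y,d_Y) be boundedly compact metric spaces and suppose there are β ≥ 0 and C ≥ 0 with H^β(E) ≤ C·diam(E)^β for all E ⊂ Y. Let u: X → Y be locally Lipschitz and set Lip₀(u) = lim_{ε→0} sup{d_Y(u(x),u(y))/d_X(x,y) : 0 < d_X(x,y) < ε}. Then for every α ≥ β and every Borel set A ⊂ X with H^α(A) < ∞, the function y ↦ H^{α-β}(u⁻¹(y) ∩ A) is H^β-measurable and ∫_Y H^{α-β}(u⁻¹(y) ∩ A) dH^β(y) ≤ C · Lip₀(u)^β · H^α(A). -/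
open MeasureTheory ENNReal

lemma cai_exists_subset_vol (t : ℝ) (V : Set ℝ) (hV : MeasurableSet V) (hVt : V ⊆ Set.Ico 0 t)
    (c : ℝ≥0∞) :
    ∃ T ⊆ V, MeasurableSet T ∧ volume T ≤ c ∧ (volume T = c ∨ T = V) := by
  by_cases h : volume V ≤ c
  · exact ⟨V, le_rfl, hV, h, Or.inr rfl⟩
  push Not at h
  have hfin : volume V ≠ ⊤ := by
    refine ne_top_of_le_ne_top ?_ (measure_mono hVt)
    simp
  have hfin' : ∀ s : Set ℝ, volume (V ∩ s) ≠ ⊤ := fun s =>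
    ne_top_of_le_ne_top hfin (measure_mono Set.inter_subset_left)
  let f : ℝ → ℝ := fun s => volume.real (V ∩ Set.Iic s)
  have hf : LipschitzWith 1 f := by
    refine LipschitzWith.of_le_add fun x y => ?_
    have h1 : V ∩ Set.Iic x ⊆ (V ∩ Set.Iic y) ∪ Set.Ioc y x := by
      intro z hz
      by_cases hzy : z ≤ y
      · exact Or.inl ⟨hz.1, hzy⟩
      · exact Or.inr ⟨lt_of_not_ge hzy, hz.2⟩
    calc f x ≤ volume.real ((V ∩ Set.Iic y) ∪ Set.Ioc y x) := by
          refine measureReal_mono h1 ?_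
          refine (measure_union_lt_top (hfin' _).lt_top ?_).ne
          simp
      _ ≤ f y + volume.real (Set.Ioc y x) := measureReal_union_le _ _
      _ ≤ f y + dist x y := by
          gcongr
          rw [Real.volume_real_Ioc, Real.dist_eq]
          exact max_le (le_abs_self _) (abs_nonneg _)
  have h0 : f (-1) = 0 := by
    have : V ∩ Set.Iic (-1) = ∅ := by
      ext z; simp only [Set.mem_inter_iff, Set.mem_Iic, Set.mem_empty_iff_false, iff_false, not_and]
      intro hz; have := (hVt hz).1; linarith
    simp [f, this]
  have h1 : f t = volume.real V := by
    have : V ∩ Set.Iic t = V := Set.inter_eq_left.2 fun z hz => (hVt hz).2.le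
    simp [f, this]
  have hcv : c.toReal ≤ volume.real V := ENNReal.toReal_mono hfin h.le
  obtain ⟨s, hs⟩ : ∃ s, f s = c.toReal := by
    have := mem_range_of_exists_le_of_exists_ge hf.continuous (c := c.toReal)
      ⟨-1, by rw [h0]; positivity⟩ ⟨t, by rw [h1]; exact hcv⟩
    exact this
  have hvol : volume (V ∩ Set.Iic s) = c := by
    rw [← ENNReal.toReal_eq_toReal_iff' (hfin' _) (h.trans_le le_top).ne]; exact hs
  exact ⟨V ∩ Set.Iic s, Set.inter_subset_left, hV.inter measurableSet_Iic, hvol.le, Or.inl hvol⟩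

lemma cai_schedule (t : ℝ) (c : ℕ → ℝ≥0∞) (p : ℕ → ℕ → Prop) (hp : WellFounded p)
    (R : ℕ → ℕ → Prop) :
    ∃ T : ℕ → Set ℝ, (∀ j, MeasurableSet (T j)) ∧ (∀ j, T j ⊆ Set.Ico 0 t) ∧
      (∀ j, volume (T j) ≤ c j) ∧
      (∀ j, volume (T j) = c j ∨ ∀ τ ∈ Set.Ico 0 t, τ ∈ T j ∨ ∃ i, p i j ∧ R i j ∧ τ ∈ T i) ∧
      (∀ i j, p i j → R i j → Disjoint (T i) (T j)) := by
  classical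
  choose G hGsub hGm hGc hG using cai_exists_subset_vol t
  let avail : ∀ j, (∀ i, p i j → Set ℝ) → Set ℝ := fun j F =>
    Set.Ico 0 t \ ⋃ (i) (h : p i j) (_ : R i j), F i h
  have hav : ∀ j F, avail j F ⊆ Set.Ico 0 t := fun j F => Set.sdiff_subset
  let step : ∀ j, (∀ i, p i j → Set ℝ) → Set ℝ := fun j F =>
    if h : MeasurableSet (avail j F) then G (avail j F) h (hav j F) (c j) else ∅
  let T : ℕ → Set ℝ := hp.fix step
  have hT : ∀ j, T j = step j (fun i _ => T i) := fun j => hp.fix_eq step j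
  have hm : ∀ j, MeasurableSet (T j) := by
    intro j
    rw [hT]
    simp only [step]
    split_ifs
    · exact hGm _ _ _ _
    · exact MeasurableSet.empty
  have ham : ∀ j, MeasurableSet (avail j (fun i _ => T i)) := fun j =>
    measurableSet_Ico.diff (MeasurableSet.iUnion fun i => MeasurableSet.iUnion fun _ =>
      MeasurableSet.iUnion fun _ => hm i)
  have hT' : ∀ j, T j = G _ (ham j) (hav j _) (c j) := fun j => by
    rw [hT]; simp only [step]; rw [dif_pos (ham j)]
  have hTsub : ∀ j, T j ⊆ avail j (fun i _ => T i) := fun j => by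
    conv_lhs => rw [hT']
    exact hGsub _ _ _ _
  refine ⟨T, hm, fun j => (hTsub j).trans (hav j _), fun j => ?_, fun j => ?_, fun i j hij hR => ?_⟩
  · rw [hT']; exact hGc _ _ _ _
  · rcases hG _ (ham j) (hav j _) (c j) with h | h
    · left; rw [hT']; exact h
    · right
      intro τ hτ
      rw [← hT'] at h
      by_contra! hcon
      apply hcon.1
      rw [h]
      refine ⟨hτ, ?_⟩
      simp only [Set.mem_iUnion, not_exists]
      exact fun i h1 h2 h3 => hcon.2 i h1 h2 h3
  · rw [Set.disjoint_left]
    intro τ hi hj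
    have := (hTsub j hj).2
    apply this
    simp only [Set.mem_iUnion]
    exact ⟨i, hij, hR, hi⟩

lemma cai_core {Y : Type*} [MetricSpace Y] (S : ℕ → Set Y) (d : ℕ → ℝ≥0∞)
    (hd : ∀ j, {i | d j ≤ d i}.Finite) (L : ℝ≥0∞)
    (hS : ∀ j, Metric.ediam (S j) ≤ L * d j) (c : ℕ → ℝ≥0∞) (t : ℝ) (ht : 0 < t)
    (E : Set Y) (hE : ∀ y ∈ E, ENNReal.ofReal t < ∑' j, (S j).indicator (fun _ => c j) y)
    (β : ℝ) (hβ : 0 ≤ β) :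
    ∃ U : ℕ → Set Y, E ⊆ ⋃ j, U j ∧ (∀ j, Metric.ediam (U j) ≤ 3 * L * d j) ∧
      ∑' j, (⨆ _ : (U j).Nonempty, Metric.ediam (U j) ^ β) ≤
        (∑' j, c j * (3 * L * d j) ^ β) / ENNReal.ofReal t := by
  classical
  let p : ℕ → ℕ → Prop := fun i j => d j < d i ∨ (d i = d j ∧ i < j)
  have hpfin : ∀ j, {i | p i j}.Finite := fun j => (hd j).subset fun i hi => by
    rcases hi with h | h
    · exact h.le
    · exact h.1.ge
  have hptrans : ∀ i j k, p i j → p j k → p i k := by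
    intro i j k h1 h2
    rcases h1 with h1 | h1 <;> rcases h2 with h2 | h2
    · exact Or.inl (h2.trans h1)
    · exact Or.inl (h2.1 ▸ h1)
    · exact Or.inl (h1.1 ▸ h2)
    · exact Or.inr ⟨h1.1.trans h2.1, h1.2.trans h2.2⟩
  have hpirr : ∀ i, ¬ p i i := by intro i h; rcases h with h | h <;> simp at h
  have hwf : WellFounded p := by
    refine Subrelation.wf (r := InvImage (· < ·) fun j => {i | p i j}.ncard) ?_
      (InvImage.wf _ wellFounded_lt)
    intro i j hij
    refine Set.ncard_lt_ncard ?_ (hpfin j)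
    refine ⟨fun k hk => hptrans _ _ _ hk hij, fun hcon => hpirr i (hcon hij)⟩
  have htri : ∀ i j, i ≠ j → p i j ∨ p j i := by
    intro i j hij
    rcases lt_trichotomy (d i) (d j) with h | h | h
    · exact Or.inr (Or.inl h)
    · rcases lt_or_gt_of_ne hij with h' | h'
      · exact Or.inl (Or.inr ⟨h, h'⟩)
      · exact Or.inr (Or.inr ⟨h.symm, h'⟩)
    · exact Or.inl (Or.inl h)
  obtain ⟨T, hTm, hTsub, hTc, hT, hTd⟩ :=
    cai_schedule t c p hwf (fun i j => (S i ∩ S j).Nonempty)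
  -- choose τ
  obtain ⟨τ, hτ, hτle⟩ : ∃ τ ∈ Set.Ico 0 t,
      ∑' j, (T j).indicator (fun _ => (3 * L * d j) ^ β) τ ≤
        (∑' j, c j * (3 * L * d j) ^ β) / ENNReal.ofReal t := by
    have hmeas : ∀ j, Measurable ((T j).indicator (fun _ => (3 * L * d j) ^ β)) := fun j =>
      measurable_const.indicator (hTm j)
    obtain ⟨τ, hτ, h⟩ := exists_le_setLAverage (μ := volume) (s := Set.Ico 0 t)
      (f := fun τ => ∑' j, (T j).indicator (fun _ => (3 * L * d j) ^ β) τ)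
      (by simp [ht]) (by simp) (Measurable.tsum hmeas).aemeasurable
    refine ⟨τ, hτ, h.trans ?_⟩
    rw [setLAverage_eq, Real.volume_Ico, sub_zero]
    gcongr
    rw [lintegral_tsum fun j => (hmeas j).aemeasurable]
    refine ENNReal.tsum_le_tsum fun j => ?_
    rw [lintegral_indicator (hTm j), setLIntegral_const, mul_comm]
    gcongr
    exact (Measure.restrict_apply_le _ _).trans (hTc j)
  refine ⟨fun i => if τ ∈ T i then ⋃ (k) (_ : d k ≤ d i ∧ (S k ∩ S i).Nonempty), S k else ∅,
    ?_, ?_, ?_⟩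
  · intro y hy
    have : ∃ j, y ∈ S j ∧ volume (T j) ≠ c j := by
      by_contra! hcon
      have h1 := hE y hy
      have h2 : ∑' j, (S j).indicator (fun _ => c j) y =
          ∑' j : {j // y ∈ S j}, volume (T j) := by
        change _ = ∑' j : ({j | y ∈ S j} : Set ℕ), volume (T j)
        rw [tsum_subtype {j | y ∈ S j} (fun j => volume (T j))]
        refine tsum_congr fun j => ?_
        by_cases hj : y ∈ S j
        · simp [hj, hcon j hj]
        · simp [hj]
      rw [h2, ← measure_iUnion] at h1
      · have : volume (⋃ j : {j // y ∈ S j}, T j) ≤ volume (Set.Ico 0 t) :=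
          measure_mono (Set.iUnion_subset fun j => hTsub _)
        rw [Real.volume_Ico, sub_zero] at this
        exact absurd h1 (not_lt.2 this)
      · intro i j hij
        have hij' : (i : ℕ) ≠ j := fun h => hij (Subtype.ext h)
        rcases htri i j hij' with h | h
        · exact hTd _ _ h ⟨y, i.2, j.2⟩
        · exact (hTd _ _ h ⟨y, j.2, i.2⟩).symm
      · exact fun j => hTm _
    obtain ⟨j, hyj, hj⟩ := this
    have := ((hT j).resolve_left hj) τ hτ
    rw [Set.mem_iUnion]
    rcases this with h | ⟨i, hij, hR, h⟩
    · refine ⟨j, ?_⟩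
      rw [if_pos h]
      simp only [Set.mem_iUnion]
      exact ⟨j, ⟨le_rfl, ⟨y, hyj, hyj⟩⟩, hyj⟩
    · refine ⟨i, ?_⟩
      rw [if_pos h]
      simp only [Set.mem_iUnion]
      refine ⟨j, ⟨?_, by rwa [Set.inter_comm]⟩, hyj⟩
      rcases hij with h | h
      · exact h.le
      · exact h.1.ge
  · intro i
    beta_reduce
    split_ifs
    · refine Metric.ediam_le fun x hx y hy => ?_
      simp only [Set.mem_iUnion] at hx hy
      obtain ⟨k, ⟨hk, a, hak, hai⟩, hxk⟩ := hx
      obtain ⟨l, ⟨hl, b, hbl, hbi⟩, hyl⟩ := hy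
      have e1 : edist x a ≤ L * d i := (Metric.edist_le_ediam_of_mem hxk hak).trans
        ((hS k).trans (by gcongr))
      have e2 : edist a b ≤ L * d i := (Metric.edist_le_ediam_of_mem hai hbi).trans (hS i)
      have e3 : edist b y ≤ L * d i := (Metric.edist_le_ediam_of_mem hbl hyl).trans
        ((hS l).trans (by gcongr))
      calc edist x y ≤ edist x a + edist a b + edist b y := edist_triangle4 _ _ _ _
        _ ≤ L * d i + L * d i + L * d i := by gcongr
        _ = 3 * L * d i := by ring
    · simp
  · refine le_trans (ENNReal.tsum_le_tsum fun i => ?_) hτle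
    by_cases h : τ ∈ T i
    · simp only [h, if_true, Set.indicator_of_mem]
      refine iSup_le fun _ => ?_
      gcongr
      refine Metric.ediam_le fun x hx y hy => ?_
      simp only [Set.mem_iUnion] at hx hy
      obtain ⟨k, ⟨hk, a, hak, hai⟩, hxk⟩ := hx
      obtain ⟨l, ⟨hl, b, hbl, hbi⟩, hyl⟩ := hy
      have e1 : edist x a ≤ L * d i := (Metric.edist_le_ediam_of_mem hxk hak).trans
        ((hS k).trans (by gcongr))
      have e2 : edist a b ≤ L * d i := (Metric.edist_le_ediam_of_mem hai hbi).trans (hS i)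
      have e3 : edist b y ≤ L * d i := (Metric.edist_le_ediam_of_mem hbl hyl).trans
        ((hS l).trans (by gcongr))
      calc edist x y ≤ edist x a + edist a b + edist b y := edist_triangle4 _ _ _ _
        _ ≤ L * d i + L * d i + L * d i := by gcongr
        _ = 3 * L * d i := by ring
    · simp [h]

noncomputable def caiCont {X : Type*} [MetricSpace X] (s : ℝ) (r : ℝ≥0∞) (B : Set X) : ℝ≥0∞ :=
  ⨅ (t : ℕ → Set X) (_ : B ⊆ ⋃ n, t n) (_ : ∀ n, Metric.ediam (t n) ≤ r),
    ∑' n, ⨆ _ : (t n).Nonempty, Metric.ediam (t n) ^ s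

lemma caiCont_anti {X : Type*} [MetricSpace X] (s : ℝ) {r r' : ℝ≥0∞} (h : r ≤ r') (B : Set X) :
    caiCont s r' B ≤ caiCont s r B := by
  unfold caiCont
  refine le_iInf fun t => le_iInf fun h1 => le_iInf fun h2 => ?_
  exact iInf_le_of_le t (iInf_le_of_le h1 (iInf_le_of_le (fun n => (h2 n).trans h) le_rfl))

lemma caiCont_le {X : Type*} [MetricSpace X] (s : ℝ) {r : ℝ≥0∞} (B : Set X) (t : ℕ → Set X)
    (h1 : B ⊆ ⋃ n, t n) (h2 : ∀ n, Metric.ediam (t n) ≤ r) :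
    caiCont s r B ≤ ∑' n, ⨆ _ : (t n).Nonempty, Metric.ediam (t n) ^ s :=
  iInf_le_of_le t (iInf_le_of_le h1 (iInf_le_of_le h2 le_rfl))

lemma caiCont_lt {X : Type*} [MetricSpace X] (s : ℝ) {r : ℝ≥0∞} (B : Set X) {c : ℝ≥0∞}
    (h : caiCont s r B < c) : ∃ t : ℕ → Set X, B ⊆ ⋃ n, t n ∧ (∀ n, Metric.ediam (t n) ≤ r) ∧
      ∑' n, (⨆ _ : (t n).Nonempty, Metric.ediam (t n) ^ s) < c := by
  unfold caiCont at h
  simp only [iInf_lt_iff] at h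
  obtain ⟨t, h1, h2, h3⟩ := h
  exact ⟨t, h1, h2, h3⟩

lemma cai_meas_eq {X : Type*} [MetricSpace X] [MeasurableSpace X] [BorelSpace X] (s : ℝ)
    (B : Set X) : μH[s] B = ⨆ (r : ℝ≥0∞) (_ : 0 < r), caiCont s r B :=
  Measure.hausdorffMeasure_apply s B

lemma caiCont_le_meas {X : Type*} [MetricSpace X] [MeasurableSpace X] [BorelSpace X] (s : ℝ)
    (B : Set X) {r : ℝ≥0∞} (hr : 0 < r) : caiCont s r B ≤ μH[s] B := by
  rw [cai_meas_eq]; exact le_iSup₂ (f := fun r _ => caiCont s r B) r hr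

lemma cai_meas_le {X : Type*} [MetricSpace X] [MeasurableSpace X] [BorelSpace X] (s : ℝ)
    (B : Set X) (c : ℝ≥0∞) (h : ∀ n : ℕ, caiCont s ((n : ℝ≥0∞) + 1)⁻¹ B ≤ c) : μH[s] B ≤ c := by
  rw [cai_meas_eq]
  refine iSup₂_le fun r hr => ?_
  obtain ⟨n, hn⟩ := ENNReal.exists_inv_nat_lt hr.ne'
  refine (caiCont_anti s ?_ B).trans (h n)
  refine le_trans ?_ hn.le
  gcongr
  exact le_self_add

lemma cai_cover {X : Type*} [MetricSpace X] [MeasurableSpace X] [BorelSpace X] {α : ℝ} (hα : 0 < α)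
    (A : Set X) {M δ : ℝ≥0∞} (hM : μH[α] A < M) (hδ : 0 < δ) :
    ∃ (t : ℕ → Set X) (d : ℕ → ℝ≥0∞), A ⊆ ⋃ n, t n ∧
      (∀ n, 0 < d n ∧ d n ≤ δ ∧ Metric.ediam (t n) ≤ d n) ∧ ∑' n, d n ^ α ≤ M := by
  obtain ⟨t, h1, h2, h3⟩ := caiCont_lt α A ((caiCont_le_meas α A hδ).trans_lt hM)
  obtain ⟨e, epos, he⟩ := ENNReal.exists_pos_sum_of_countable (tsub_pos_of_lt h3).ne' ℕ
  refine ⟨t, fun n => max (Metric.ediam (t n)) (min δ ((e n : ℝ≥0∞) ^ (1 / α))), h1,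
    fun n => ⟨?_, ?_, ?_⟩, ?_⟩
  · refine lt_max_of_lt_right (lt_min hδ ?_)
    exact ENNReal.rpow_pos (by exact_mod_cast epos n) ENNReal.coe_ne_top
  · exact max_le (h2 n) (min_le_left _ _)
  · exact le_max_left _ _
  · calc _ ≤ ∑' n, ((⨆ _ : (t n).Nonempty, Metric.ediam (t n) ^ α) + (e n : ℝ≥0∞)) := by
          refine ENNReal.tsum_le_tsum fun n => ?_
          beta_reduce
          have hm : min δ ((e n : ℝ≥0∞) ^ (1 / α)) ^ α ≤ e n := by
            calc _ ≤ ((e n : ℝ≥0∞) ^ (1 / α)) ^ α := by gcongr; exact min_le_right _ _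
              _ = e n := by rw [← ENNReal.rpow_mul, one_div_mul_cancel hα.ne', ENNReal.rpow_one]
          rcases le_total (Metric.ediam (t n)) (min δ ((e n : ℝ≥0∞) ^ (1 / α))) with h | h
          · rw [max_eq_right h]
            exact hm.trans le_add_self
          · rw [max_eq_left h]
            refine le_trans ?_ le_self_add
            rcases (t n).eq_empty_or_nonempty with h0 | h0
            · simp [h0, hα]
            · simp [h0]
      _ = ∑' n, (⨆ _ : (t n).Nonempty, Metric.ediam (t n) ^ α) + ∑' n, (e n : ℝ≥0∞) :=
          ENNReal.tsum_add
      _ ≤ ∑' n, (⨆ _ : (t n).Nonempty, Metric.ediam (t n) ^ α) +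
            (M - ∑' n, (⨆ _ : (t n).Nonempty, Metric.ediam (t n) ^ α)) := by gcongr
      _ = M := add_tsub_cancel_of_le h3.le

lemma cai_null {X Y : Type*} [MetricSpace X] [MeasurableSpace X] [BorelSpace X]
    [MetricSpace Y] [MeasurableSpace Y] [BorelSpace Y] (u : X → Y) (A : Set X) (α β : ℝ)
    (hβ : 0 ≤ β) (hαβ : β ≤ α) (hα : 0 < α)
    (h : ∀ δ : ℝ≥0∞, 0 < δ → ∀ η : ℝ≥0∞, 0 < η → ∃ (t : ℕ → Set X) (d : ℕ → ℝ≥0∞) (L : ℝ≥0∞),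
      A ⊆ ⋃ n, t n ∧ (∀ n, 0 < d n ∧ d n ≤ δ ∧ Metric.ediam (t n) ≤ d n ∧
        Metric.ediam (u '' (t n ∩ A)) ≤ L * d n ∧ L * d n ≤ δ) ∧
      ∑' n, d n ^ α ≠ ⊤ ∧ L ^ β * ∑' n, d n ^ α ≤ η) :
    ∀ᵐ y ∂(μH[β] : Measure Y), μH[α - β] (u ⁻¹' {y} ∩ A) = 0 := by
  classical
  have hs : 0 ≤ α - β := sub_nonneg.2 hαβ
  have key : ∀ n k : ℕ, μH[β] {y : Y | ENNReal.ofReal (1 / ((k : ℝ) + 1)) <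
      caiCont (α - β) ((n : ℝ≥0∞) + 1)⁻¹ (u ⁻¹' {y} ∩ A)} = 0 := by
    intro n k
    set E := {y : Y | ENNReal.ofReal (1 / ((k : ℝ) + 1)) <
      caiCont (α - β) ((n : ℝ≥0∞) + 1)⁻¹ (u ⁻¹' {y} ∩ A)} with hEdef
    have hk : (0 : ℝ) < 1 / ((k : ℝ) + 1) := by positivity
    set q := 1 / ((k : ℝ) + 1) with hq
    have hq0 : ENNReal.ofReal q ≠ 0 := by simpa using hk
    rw [← nonpos_iff_eq_zero, cai_meas_eq]
    refine iSup₂_le fun r hr => ?_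
    refine le_of_forall_gt_imp_ge_of_dense fun η hη => ?_
    have h3 : (3 : ℝ≥0∞) ^ β ≠ 0 := by simp
    have h3' : (3 : ℝ≥0∞) ^ β ≠ ⊤ := ENNReal.rpow_ne_top_of_nonneg hβ (by simp)
    obtain ⟨t, d, L, hcov, hd, hfin, hle⟩ := h (min (r / 3) ((n : ℝ≥0∞) + 1)⁻¹)
      (lt_min (ENNReal.div_pos hr.ne' (by simp)) (by simp))
      (η * ENNReal.ofReal q / 3 ^ β)
      (ENNReal.div_pos (mul_ne_zero hη.ne' hq0) h3')
    obtain ⟨U, hEU, hUd, hU⟩ := cai_core (fun j => u '' (t j ∩ A)) d (fun j => by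
        refine (ENNReal.finite_const_le_of_tsum_ne_top hfin (ε := d j ^ α) ?_).subset ?_
        · simp only [ne_eq, ENNReal.rpow_eq_zero_iff, not_or, not_and, not_lt]
          exact ⟨fun h => absurd h (hd j).1.ne', fun _ => hα.le⟩
        · intro i hi
          exact ENNReal.rpow_le_rpow hi hα.le) L
      (fun j => (hd j).2.2.2.1) (fun j => d j ^ (α - β)) q hk E (by
        intro y hy
        refine lt_of_lt_of_le hy ?_
        refine (caiCont_le _ _ (fun j => if y ∈ u '' (t j ∩ A) then t j else ∅) ?_ ?_).trans ?_
        · intro x hx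
          obtain ⟨j, hj⟩ := Set.mem_iUnion.1 (hcov hx.2)
          refine Set.mem_iUnion.2 ⟨j, ?_⟩
          rw [if_pos ⟨x, ⟨hj, hx.2⟩, hx.1⟩]
          exact hj
        · intro j
          beta_reduce
          split_ifs
          · exact (hd j).2.2.1.trans ((hd j).2.1.trans (min_le_right _ _))
          · simp
        · refine ENNReal.tsum_le_tsum fun j => ?_
          by_cases hj : y ∈ u '' (t j ∩ A)
          · rw [Set.indicator_of_mem hj]
            simp only [if_pos hj]
            refine iSup_le fun _ => ?_
            exact ENNReal.rpow_le_rpow (hd j).2.2.1 hs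
          · simp only [if_neg hj]
            simp) β hβ
    refine (caiCont_le _ _ U hEU fun j => (hUd j).trans ?_).trans (hU.trans ?_)
    · rw [mul_assoc]
      calc 3 * (L * d j) ≤ 3 * (r / 3) := by
            gcongr
            exact (hd j).2.2.2.2.trans (min_le_left _ _)
        _ ≤ r := ENNReal.mul_div_le
    · have : ∀ j, d j ^ (α - β) * (3 * L * d j) ^ β = 3 ^ β * L ^ β * d j ^ α := by
        intro j
        rw [ENNReal.mul_rpow_of_nonneg _ _ hβ, ENNReal.mul_rpow_of_nonneg _ _ hβ, mul_comm, mul_assoc,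
          ← ENNReal.rpow_add_of_nonneg _ _ hβ hs]
        congr 2
        ring
      simp_rw [this]
      rw [ENNReal.tsum_mul_left, mul_assoc]
      refine ENNReal.div_le_of_le_mul ?_
      calc 3 ^ β * (L ^ β * ∑' n, d n ^ α) ≤ 3 ^ β * (η * ENNReal.ofReal q / 3 ^ β) := by gcongr
        _ ≤ _ := ENNReal.mul_div_le
  have key2 := ae_all_iff.2 fun n => ae_all_iff.2 fun k => (measure_eq_zero_iff_ae_notMem.1 (key n k))
  filter_upwards [key2] with y hy
  rw [← nonpos_iff_eq_zero]
  refine cai_meas_le _ _ _ fun n => ?_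
  refine le_of_forall_gt_imp_ge_of_dense fun η hη => ?_
  obtain ⟨k, hk⟩ := ENNReal.exists_inv_nat_lt hη.ne'
  have := hy n k
  replace this := not_lt.1 this
  refine this.trans (le_trans ?_ hk.le)
  rw [one_div, ENNReal.ofReal_inv_of_pos (by positivity)]
  gcongr
  rw [ENNReal.ofReal_add (by positivity) (by norm_num), ENNReal.ofReal_natCast]
  exact le_self_add

lemma cai_null_loc {X Y : Type*} [MetricSpace X] [SecondCountableTopology X] [MeasurableSpace X]
    [BorelSpace X] [MetricSpace Y] [MeasurableSpace Y] [BorelSpace Y] (u : X → Y)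
    (hu : LocallyLipschitz u) (N : Set X) (α β : ℝ)
    (hβ : 0 ≤ β) (hαβ : β ≤ α) (hN : μH[α] N = 0) :
    ∀ᵐ y ∂(μH[β] : Measure Y), μH[α - β] (u ⁻¹' {y} ∩ N) = 0 := by
  rcases hβ.eq_or_lt with h0 | hβ0
  · subst h0
    refine Filter.Eventually.of_forall fun y => ?_
    rw [sub_zero]
    exact measure_mono_null Set.inter_subset_right hN
  have hα : 0 < α := hβ0.trans_le hαβ
  choose K f hf hK using hu
  obtain ⟨s, hs, hsu⟩ := TopologicalSpace.countable_cover_nhds hf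
  have key : ∀ x ∈ s, ∀ᵐ y ∂(μH[β] : Measure Y), μH[α - β] (u ⁻¹' {y} ∩ (N ∩ f x)) = 0 := by
    intro x _
    refine cai_null u _ α β hβ hαβ hα fun δ hδ η hη => ?_
    have hL0 : ((K x : ℝ≥0∞) + 1) ≠ 0 := by simp
    have hLt : ((K x : ℝ≥0∞) + 1) ≠ ⊤ := by simp
    have hLb0 : ((K x : ℝ≥0∞) + 1) ^ β ≠ 0 := (ENNReal.rpow_pos (pos_iff_ne_zero.2 hL0) hLt).ne'
    have hLbt : ((K x : ℝ≥0∞) + 1) ^ β ≠ ⊤ := ENNReal.rpow_ne_top_of_nonneg hβ hLt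
    have hN' : μH[α] (N ∩ f x) < min 1 (η / ((K x : ℝ≥0∞) + 1) ^ β) := by
      rw [measure_mono_null Set.inter_subset_left hN]
      exact lt_min one_pos (ENNReal.div_pos hη.ne' hLbt)
    obtain ⟨t, d, h1, h2, h3⟩ := cai_cover hα (N ∩ f x) hN'
      (δ := min δ (δ / ((K x : ℝ≥0∞) + 1))) (lt_min hδ (ENNReal.div_pos hδ.ne' hLt))
    refine ⟨t, d, (K x : ℝ≥0∞) + 1, h1, fun n => ⟨(h2 n).1, (h2 n).2.1.trans (min_le_left _ _),
      (h2 n).2.2, ?_, ?_⟩, ?_, ?_⟩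
    · rw [Metric.ediam_image_le_iff]
      intro a ha b hb
      calc edist (u a) (u b) ≤ K x * edist a b := hK x ha.2.2 hb.2.2
        _ ≤ (K x + 1) * d n := by
          gcongr
          · exact le_self_add
          · exact (Metric.edist_le_ediam_of_mem ha.1 hb.1).trans (h2 n).2.2
    · calc _ ≤ ((K x : ℝ≥0∞) + 1) * (δ / ((K x : ℝ≥0∞) + 1)) := by
            gcongr
            exact (h2 n).2.1.trans (min_le_right _ _)
        _ ≤ δ := ENNReal.mul_div_le
    · exact ne_top_of_le_ne_top (by simp) (h3.trans (min_le_left _ _))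
    · calc _ ≤ ((K x : ℝ≥0∞) + 1) ^ β * (η / ((K x : ℝ≥0∞) + 1) ^ β) := by
            gcongr
            exact h3.trans (min_le_right _ _)
        _ ≤ η := ENNReal.mul_div_le
  have key2 := (ae_ball_iff hs).2 key
  filter_upwards [key2] with y hy
  refine measure_mono_null (t := ⋃ x ∈ s, u ⁻¹' {y} ∩ (N ∩ f x)) ?_
    ((measure_biUnion_null_iff hs).2 hy)
  intro z hz
  have : z ∈ ⋃ x ∈ s, f x := hsu ▸ Set.mem_univ z
  simp only [Set.mem_iUnion] at this ⊢
  obtain ⟨x, hx, hzx⟩ := this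
  exact ⟨x, hx, hz.1, hz.2, hzx⟩

lemma cai_lip {X Y : Type*} [MetricSpace X] [MetricSpace Y] (u : X → Y) (L : ℝ≥0∞)
    (h : (⨅ (ε : ℝ) (_ : 0 < ε),
      ⨆ (x : X) (y : X) (_ : x ≠ y) (_ : dist x y < ε), edist (u x) (u y) / edist x y) < L) :
    ∃ ε : ℝ≥0∞, 0 < ε ∧ ∀ S : Set X, Metric.ediam S < ε →
      Metric.ediam (u '' S) ≤ L * Metric.ediam S := by
  simp only [iInf_lt_iff] at h
  obtain ⟨ε, hε, h⟩ := h
  refine ⟨ENNReal.ofReal ε, by simpa using hε, fun S hS => ?_⟩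
  rw [Metric.ediam_image_le_iff]
  intro x hx y hy
  have hxy : edist x y ≤ Metric.ediam S := Metric.edist_le_ediam_of_mem hx hy
  by_cases hne : x = y
  · simp [hne]
  have hd : dist x y < ε := by
    have := hxy.trans_lt hS
    rw [edist_dist] at this
    exact (ENNReal.ofReal_lt_ofReal_iff hε).1 this
  have h1 : edist (u x) (u y) / edist x y ≤ L := by
    refine le_trans ?_ h.le
    exact le_iSup_of_le x (le_iSup_of_le y (le_iSup_of_le hne (le_iSup_of_le hd le_rfl)))
  rw [ENNReal.div_le_iff (by simpa using hne) (edist_ne_top _ _)] at h1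
  exact h1.trans (by gcongr)

lemma cai_null_lip {X Y : Type*} [MetricSpace X] [MeasurableSpace X]
    [BorelSpace X] [MetricSpace Y] [MeasurableSpace Y] [BorelSpace Y] (u : X → Y)
    (A : Set X) (α β : ℝ) (hβ : 0 < β) (hαβ : β ≤ α) (hA : μH[α] A < ⊤)
    (h : (⨅ (ε : ℝ) (_ : 0 < ε),
      ⨆ (x : X) (y : X) (_ : x ≠ y) (_ : dist x y < ε), edist (u x) (u y) / edist x y) = 0) :
    ∀ᵐ y ∂(μH[β] : Measure Y), μH[α - β] (u ⁻¹' {y} ∩ A) = 0 := by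
  have hα : 0 < α := hβ.trans_le hαβ
  refine cai_null u _ α β hβ.le hαβ hα fun δ hδ η hη => ?_
  set M := μH[α] A + 1 with hMdef
  have hMt : M ≠ ⊤ := by simp [hMdef, hA.ne]
  have hM : μH[α] A < M := ENNReal.lt_add_right hA.ne one_ne_zero
  set L := min 1 ((η / M) ^ (1 / β)) with hLdef
  have hL0 : 0 < L := by
    refine lt_min one_pos ?_
    have : 0 < η / M := ENNReal.div_pos hη.ne' hMt
    rw [pos_iff_ne_zero, ne_eq, ENNReal.rpow_eq_zero_iff]
    push Not
    exact ⟨fun h => absurd h this.ne', fun _ => by positivity⟩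
  have hLb : L ^ β ≤ η / M := by
    calc L ^ β ≤ ((η / M) ^ (1 / β)) ^ β := by gcongr; exact min_le_right _ _
      _ = η / M := by rw [← ENNReal.rpow_mul, one_div_mul_cancel hβ.ne', ENNReal.rpow_one]
  obtain ⟨ε, hε, hlip⟩ := cai_lip u L (h ▸ hL0)
  obtain ⟨ε', hε'0, hε'⟩ := exists_between hε
  obtain ⟨t, d, h1, h2, h3⟩ := cai_cover hα A hM (δ := min δ ε') (lt_min hδ hε'0)
  refine ⟨t, d, L, h1, fun n => ⟨(h2 n).1, (h2 n).2.1.trans (min_le_left _ _),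
      (h2 n).2.2, ?_, ?_⟩, ?_, ?_⟩
  · have hdm : Metric.ediam (t n ∩ A) ≤ d n :=
      (Metric.ediam_mono Set.inter_subset_left).trans (h2 n).2.2
    refine (hlip _ ?_).trans (by gcongr)
    exact (hdm.trans ((h2 n).2.1.trans (min_le_right _ _))).trans_lt hε'
  · calc L * d n ≤ 1 * δ := by
          gcongr
          · exact min_le_left _ _
          · exact (h2 n).2.1.trans (min_le_left _ _)
      _ = δ := one_mul _
  · exact ne_top_of_le_ne_top hMt h3
  · calc _ ≤ η / M * M := by gcongr
      _ = M * (η / M) := mul_comm _ _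
      _ ≤ η := ENNReal.mul_div_le

lemma cai_open_cover {X : Type*} [MetricSpace X] (s : ℝ) (hs : 0 ≤ s) (r : ℝ≥0∞) (hr : 0 < r)
    (hrt : r ≠ ⊤) (B : Set X) (c : ℝ≥0∞)
    (h : caiCont s r B < c) : ∃ t : ℕ → Set X, (∀ n, IsOpen (t n)) ∧ B ⊆ ⋃ n, t n ∧
      (∀ n, Metric.ediam (t n) ≤ 2 * r) ∧
      ∑' n, (⨆ _ : (t n).Nonempty, Metric.ediam (t n) ^ s) < c := by
  obtain ⟨t, h1, h2, h3⟩ := caiCont_lt s B h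
  obtain ⟨e, epos, he⟩ := ENNReal.exists_pos_sum_of_countable (tsub_pos_of_lt h3).ne' ℕ
  have hdt : ∀ n, Metric.ediam (t n) ≠ ⊤ := fun n => ne_top_of_le_ne_top hrt (h2 n)
  have : ∀ n, ∃ ρ : ℝ, 0 < ρ ∧ 2 * ENNReal.ofReal ρ ≤ r ∧
      (Metric.ediam (t n) + 2 * ENNReal.ofReal ρ) ^ s ≤ Metric.ediam (t n) ^ s + e n := by
    intro n
    have hcont : Filter.Tendsto (fun ρ : ℝ => (Metric.ediam (t n) + 2 * ENNReal.ofReal ρ) ^ s)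
        (nhdsWithin 0 (Set.Ioi 0)) (nhds (Metric.ediam (t n) ^ s)) := by
      have : Continuous (fun ρ : ℝ => (Metric.ediam (t n) + 2 * ENNReal.ofReal ρ) ^ s) := by
        refine ENNReal.continuous_rpow_const.comp (continuous_const.add ?_)
        exact (ENNReal.continuous_const_mul (by simp)).comp ENNReal.continuous_ofReal
      have h := this.tendsto 0
      simp only [ENNReal.ofReal_zero, mul_zero, add_zero] at h
      exact h.mono_left nhdsWithin_le_nhds
    have hcont2 : Filter.Tendsto (fun ρ : ℝ => 2 * ENNReal.ofReal ρ)
        (nhdsWithin 0 (Set.Ioi 0)) (nhds 0) := by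
      have : Continuous (fun ρ : ℝ => 2 * ENNReal.ofReal ρ) :=
        (ENNReal.continuous_const_mul (by simp)).comp ENNReal.continuous_ofReal
      have h := this.tendsto 0
      simp only [ENNReal.ofReal_zero, mul_zero] at h
      exact h.mono_left nhdsWithin_le_nhds
    have hlt : Metric.ediam (t n) ^ s < Metric.ediam (t n) ^ s + e n :=
      ENNReal.lt_add_right (ENNReal.rpow_ne_top_of_nonneg hs (hdt n))
        (by exact_mod_cast (epos n).ne')
    obtain ⟨ρ, ⟨ha, hb⟩, hc⟩ := (((hcont.eventually (gt_mem_nhds hlt)).and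
      (hcont2.eventually (gt_mem_nhds hr))).and self_mem_nhdsWithin).exists
    exact ⟨ρ, hc, hb.le, ha.le⟩
  choose ρ hρ0 hρr hρ using this
  have hdiam : ∀ n, Metric.ediam (Metric.thickening (ρ n) (t n)) ≤
      Metric.ediam (t n) + 2 * ENNReal.ofReal (ρ n) := by
    intro n
    refine Metric.ediam_le fun x hx y hy => ?_
    obtain ⟨a, ha, hxa⟩ := Metric.mem_thickening_iff.1 hx
    obtain ⟨b, hb, hyb⟩ := Metric.mem_thickening_iff.1 hy
    have e1 : edist x a ≤ ENNReal.ofReal (ρ n) := by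
      rw [edist_dist]; exact ENNReal.ofReal_le_ofReal hxa.le
    have e2 : edist b y ≤ ENNReal.ofReal (ρ n) := by
      rw [edist_comm, edist_dist]; exact ENNReal.ofReal_le_ofReal hyb.le
    calc edist x y ≤ edist x a + edist a b + edist b y := edist_triangle4 _ _ _ _
      _ ≤ ENNReal.ofReal (ρ n) + Metric.ediam (t n) + ENNReal.ofReal (ρ n) := by
        gcongr; exact Metric.edist_le_ediam_of_mem ha hb
      _ = _ := by ring
  refine ⟨fun n => Metric.thickening (ρ n) (t n), fun n => Metric.isOpen_thickening,
    h1.trans (Set.iUnion_mono fun n => Metric.self_subset_thickening (hρ0 n) _), fun n => ?_, ?_⟩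
  · calc _ ≤ _ := hdiam n
      _ ≤ r + r := add_le_add (h2 n) (hρr n)
      _ = 2 * r := by ring
  · calc _ ≤ ∑' n, ((⨆ _ : (t n).Nonempty, Metric.ediam (t n) ^ s) + (e n : ℝ≥0∞)) := by
          refine ENNReal.tsum_le_tsum fun n => iSup_le fun hne => ?_
          have hne' : (t n).Nonempty := by
            obtain ⟨x, hx⟩ := hne
            obtain ⟨a, ha, _⟩ := Metric.mem_thickening_iff.1 hx
            exact ⟨a, ha⟩
          rw [iSup_pos hne']
          exact (ENNReal.rpow_le_rpow (hdiam n) hs).trans (hρ n)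
      _ = ∑' n, (⨆ _ : (t n).Nonempty, Metric.ediam (t n) ^ s) + ∑' n, (e n : ℝ≥0∞) :=
          ENNReal.tsum_add
      _ < ∑' n, (⨆ _ : (t n).Nonempty, Metric.ediam (t n) ^ s) +
            (c - ∑' n, (⨆ _ : (t n).Nonempty, Metric.ediam (t n) ^ s)) :=
          ENNReal.add_lt_add_left (h3.trans_le le_top).ne he
      _ = c := add_tsub_cancel_of_le h3.le

lemma cai_meas_compact {X Y : Type*} [MetricSpace X] [MeasurableSpace X]
    [BorelSpace X] [MetricSpace Y] [MeasurableSpace Y] [BorelSpace Y] (u : X → Y)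
    (hu : Continuous u) (s : ℝ) (hs : 0 ≤ s) (K : Set X) (hK : IsCompact K) :
    Measurable (fun y : Y => μH[s] (u ⁻¹' {y} ∩ K)) := by
  refine measurable_of_Iic fun c => ?_
  rcases eq_or_ne c ⊤ with rfl | hc
  · simp
  let G : ℕ → Set Y := fun n => {y | ∃ t : ℕ → Set X, (∀ i, IsOpen (t i)) ∧
    u ⁻¹' {y} ∩ K ⊆ ⋃ i, t i ∧ (∀ i, Metric.ediam (t i) ≤ ((n : ℝ≥0∞) + 1)⁻¹) ∧
      ∑' i, (⨆ _ : (t i).Nonempty, Metric.ediam (t i) ^ s) < c + ((n : ℝ≥0∞) + 1)⁻¹}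
  have hG : ∀ n, IsOpen (G n) := by
    intro n
    rw [isOpen_iff_mem_nhds]
    rintro y ⟨t, ht1, ht2, ht3, ht4⟩
    have hcl : IsClosed (u '' (K \ ⋃ i, t i)) :=
      ((hK.diff (isOpen_iUnion ht1)).image hu).isClosed
    have hy : y ∈ (u '' (K \ ⋃ i, t i))ᶜ := by
      rintro ⟨x, hx, hxy⟩
      exact hx.2 (ht2 ⟨hxy, hx.1⟩)
    filter_upwards [hcl.isOpen_compl.mem_nhds hy] with z hz
    refine ⟨t, ht1, ?_, ht3, ht4⟩
    intro x hx
    by_contra hcon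
    exact hz ⟨x, ⟨hx.2, hcon⟩, hx.1⟩
  have : (fun y : Y => μH[s] (u ⁻¹' {y} ∩ K)) ⁻¹' Set.Iic c = ⋂ n, G n := by
    ext y
    simp only [Set.mem_preimage, Set.mem_Iic, Set.mem_iInter]
    constructor
    · intro h n
      have hr : (0 : ℝ≥0∞) < ((n : ℝ≥0∞) + 1)⁻¹ := by simp
      have hrt : ((n : ℝ≥0∞) + 1)⁻¹ ≠ ⊤ := by simp
      have hr2 : (0 : ℝ≥0∞) < ((n : ℝ≥0∞) + 1)⁻¹ / 2 := ENNReal.half_pos hr.ne'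
      obtain ⟨t, h1, h2, h3, h4⟩ := cai_open_cover s hs (((n : ℝ≥0∞) + 1)⁻¹ / 2) hr2
        (ne_top_of_le_ne_top hrt ENNReal.half_le_self) (u ⁻¹' {y} ∩ K) (c + ((n : ℝ≥0∞) + 1)⁻¹)
        (((caiCont_le_meas s _ hr2).trans h).trans_lt (ENNReal.lt_add_right hc hr.ne'))
      exact ⟨t, h1, h2, fun i => (h3 i).trans ENNReal.mul_div_le, h4⟩
    · intro h
      rw [cai_meas_eq]
      refine iSup₂_le fun r hr => ?_
      refine ENNReal.le_of_forall_pos_le_add fun ε hε _ => ?_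
      obtain ⟨n, hn⟩ := ENNReal.exists_inv_nat_lt (a := min r ε)
        (lt_min hr (by exact_mod_cast hε)).ne'
      have hn' : ((n : ℝ≥0∞) + 1)⁻¹ ≤ min r ε := by
        refine le_trans ?_ hn.le
        gcongr
        exact le_self_add
      obtain ⟨t, h1, h2, h3, h4⟩ := h n
      refine (caiCont_le s _ t h2 fun i => (h3 i).trans (hn'.trans (min_le_left _ _))).trans ?_
      refine h4.le.trans ?_
      gcongr
      exact hn'.trans (min_le_right _ _)
  rw [this]
  exact MeasurableSet.iInter fun n => (hG n).measurableSet

lemma cai_bound {X Y : Type*} [MetricSpace X] [MeasurableSpace X]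
    [BorelSpace X] [MetricSpace Y] [MeasurableSpace Y] [BorelSpace Y]
    (β : ℝ) (hβ : 0 ≤ β) (C : ℝ≥0∞)
    (hC : ∀ E : Set Y, μH[β] E ≤ C * (Metric.ediam E) ^ β)
    (u : X → Y) (α : ℝ) (hαβ : β ≤ α) (A : Set X) (hAfin : μH[α] A < ⊤)
    (hCt : C ≠ ⊤) (D : ℝ≥0∞) (hDt : D ≠ ⊤)
    (hD : ∃ ε : ℝ≥0∞, 0 < ε ∧ ∀ S : Set X, S.Nonempty → Metric.ediam S < ε →
      Metric.ediam (u '' S) ^ β ≤ D * Metric.ediam S ^ β) :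
    ∫⁻ y, μH[α - β] (u ⁻¹' {y} ∩ A) ∂μH[β] ≤ C * D * μH[α] A := by
  have hs : 0 ≤ α - β := sub_nonneg.2 hαβ
  obtain ⟨ε, hε, hD⟩ := hD
  obtain ⟨ε', hε'0, hε'⟩ := exists_between hε
  have hr : ∀ n : ℕ, (0 : ℝ≥0∞) < ((n : ℝ≥0∞) + 1)⁻¹ := fun n => by simp
  have hcov : ∀ n : ℕ, ∃ t : ℕ → Set X, A ⊆ ⋃ i, t i ∧
      (∀ i, Metric.ediam (t i) ≤ min ε' ((n : ℝ≥0∞) + 1)⁻¹) ∧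
      ∑' i, (⨆ _ : (t i).Nonempty, Metric.ediam (t i) ^ α) < μH[α] A + ((n : ℝ≥0∞) + 1)⁻¹ :=
    fun n => caiCont_lt α A ((caiCont_le_meas α A (lt_min hε'0 (hr n))).trans_lt
      (ENNReal.lt_add_right hAfin.ne (hr n).ne'))
  choose t ht1 ht2 ht3 using hcov
  let g : ℕ → Y → ℝ≥0∞ := fun n y =>
    ∑' i, (closure (u '' t n i)).indicator (fun _ => Metric.ediam (t n i) ^ (α - β)) y
  have hgm : ∀ n, Measurable (g n) := fun n =>
    Measurable.tsum fun i => measurable_const.indicator isClosed_closure.measurableSet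
  have hr0 : Filter.Tendsto (fun n : ℕ => ((n : ℝ≥0∞) + 1)⁻¹) Filter.atTop (nhds 0) := by
    have := (Filter.tendsto_add_atTop_iff_nat 1).2 ENNReal.tendsto_inv_nat_nhds_zero
    simpa using this
  have hfg : ∀ y, μH[α - β] (u ⁻¹' {y} ∩ A) ≤ Filter.liminf (fun n => g n y) Filter.atTop := by
    intro y
    have := Measure.hausdorffMeasure_le_liminf_tsum (β := ℕ)
      (ι := fun n => ({i | y ∈ closure (u '' t n i)} : Set ℕ)) (α - β) (u ⁻¹' {y} ∩ A)
      (l := Filter.atTop) (fun n : ℕ => ((n : ℝ≥0∞) + 1)⁻¹) hr0 (fun n i => t n i)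
      (Filter.Eventually.of_forall fun n i => (ht2 n i).trans (min_le_right _ _))
      (Filter.Eventually.of_forall fun n => by
        intro x hx
        obtain ⟨i, hi⟩ := Set.mem_iUnion.1 (ht1 n hx.2)
        refine Set.mem_iUnion.2 ⟨⟨i, ?_⟩, hi⟩
        exact subset_closure ⟨x, hi, hx.1⟩)
    refine this.trans_eq ?_
    congr 1
    ext n
    rw [tsum_subtype {i | y ∈ closure (u '' t n i)} (fun i => Metric.ediam (t n i) ^ (α - β))]
    rfl
  have hgi : ∀ n, ∫⁻ y, g n y ∂μH[β] ≤ C * D * (μH[α] A + ((n : ℝ≥0∞) + 1)⁻¹) := by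
    intro n
    calc ∫⁻ y, g n y ∂μH[β] = ∑' i, Metric.ediam (t n i) ^ (α - β) *
          μH[β] (closure (u '' t n i)) := by
          simp only [g]
          rw [lintegral_tsum fun i =>
            (measurable_const.indicator isClosed_closure.measurableSet).aemeasurable]
          refine tsum_congr fun i => ?_
          rw [lintegral_indicator isClosed_closure.measurableSet, setLIntegral_const]
      _ ≤ ∑' i, C * D * (⨆ _ : (t n i).Nonempty, Metric.ediam (t n i) ^ α) := by
          refine ENNReal.tsum_le_tsum fun i => ?_
          rcases (t n i).eq_empty_or_nonempty with h | h
          · simp [h]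
          · rw [iSup_pos h]
            calc _ ≤ Metric.ediam (t n i) ^ (α - β) * (C * (D * Metric.ediam (t n i) ^ β)) := by
                  gcongr
                  refine (hC _).trans ?_
                  rw [Metric.ediam_closure]
                  gcongr
                  exact hD _ h (((ht2 n i).trans (min_le_left _ _)).trans_lt hε')
              _ = C * D * (Metric.ediam (t n i) ^ (α - β) * Metric.ediam (t n i) ^ β) := by ring
              _ = _ := by
                  rw [← ENNReal.rpow_add_of_nonneg _ _ hs hβ, sub_add_cancel]
      _ = C * D * ∑' i, (⨆ _ : (t n i).Nonempty, Metric.ediam (t n i) ^ α) :=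
          ENNReal.tsum_mul_left
      _ ≤ _ := by gcongr; exact (ht3 n).le
  have hlim : Filter.Tendsto (fun n : ℕ => C * D * (μH[α] A + ((n : ℝ≥0∞) + 1)⁻¹)) Filter.atTop
      (nhds (C * D * μH[α] A)) := by
    refine ENNReal.Tendsto.const_mul ?_ (Or.inr (ENNReal.mul_ne_top hCt hDt))
    simpa using hr0.const_add (μH[α] A)
  calc _ ≤ ∫⁻ y, Filter.liminf (fun n => g n y) Filter.atTop ∂μH[β] := lintegral_mono hfg
    _ ≤ Filter.liminf (fun n => ∫⁻ y, g n y ∂μH[β]) Filter.atTop := lintegral_liminf_le hgm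
    _ ≤ Filter.liminf (fun n : ℕ => C * D * (μH[α] A + ((n : ℝ≥0∞) + 1)⁻¹)) Filter.atTop :=
        Filter.liminf_le_liminf (Filter.Eventually.of_forall hgi)
    _ = _ := hlim.liminf_eq

lemma cai_aemeas {X Y : Type*} [MetricSpace X] [ProperSpace X] [MeasurableSpace X]
    [BorelSpace X] [MetricSpace Y] [MeasurableSpace Y] [BorelSpace Y]
    (β : ℝ) (hβ : 0 ≤ β) (u : X → Y) (hu : LocallyLipschitz u)
    (α : ℝ) (hαβ : β ≤ α)
    (A : Set X) (hA : MeasurableSet A) (hAfin : μH[α] A < ⊤) :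
    AEMeasurable (fun y : Y => μH[α - β] (u ⁻¹' {y} ∩ A)) μH[β] := by
  have hs : 0 ≤ α - β := sub_nonneg.2 hαβ
  haveI : IsFiniteMeasure ((μH[α] : Measure X).restrict A) :=
    ⟨by rw [Measure.restrict_apply_univ]; exact hAfin⟩
  have hex : ∀ n : ℕ, ∃ K ⊆ A, IsCompact K ∧
      (μH[α] : Measure X).restrict A (A \ K) < ((n : ℝ≥0∞) + 1)⁻¹ := fun n =>
    hA.exists_isCompact_sdiff_lt (measure_ne_top _ _) (by simp)
  choose K hKA hKc hK using hex
  have hKm : ∀ n, MeasurableSet (K n) := fun n => (hKc n).measurableSet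
  let P : ℕ → Set X := fun n => Set.accumulate K n
  have hPc : ∀ n, IsCompact (P n) := fun n => isCompact_accumulate hKc n
  have hN : μH[α] (A \ ⋃ n, K n) = 0 := by
    rw [← nonpos_iff_eq_zero]
    refine le_of_forall_gt_imp_ge_of_dense fun η hη => ?_
    obtain ⟨n, hn⟩ := ENNReal.exists_inv_nat_lt hη.ne'
    have h1 := hK n
    rw [Measure.restrict_apply (hA.diff (hKm n)), Set.inter_eq_left.2 Set.sdiff_subset] at h1
    calc μH[α] (A \ ⋃ n, K n) ≤ μH[α] (A \ K n) :=
          measure_mono (Set.sdiff_subset_sdiff_right (Set.subset_iUnion K n))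
      _ ≤ ((n : ℝ≥0∞) + 1)⁻¹ := h1.le
      _ ≤ (n : ℝ≥0∞)⁻¹ := by gcongr; exact le_self_add
      _ ≤ η := hn.le
  refine ⟨fun y => ⨆ n, μH[α - β] (u ⁻¹' {y} ∩ P n),
    Measurable.iSup fun n => cai_meas_compact u hu.continuous _ hs _ (hPc n), ?_⟩
  filter_upwards [cai_null_loc u hu _ α β hβ hαβ hN] with y hy
  have hmono : Monotone fun n => u ⁻¹' {y} ∩ P n := fun m n hmn =>
    Set.inter_subset_inter_right _ (Set.monotone_accumulate hmn)
  rw [← hmono.measure_iUnion, ← Set.inter_iUnion, Set.iUnion_accumulate]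
  apply le_antisymm
  · calc μH[α - β] (u ⁻¹' {y} ∩ A)
        ≤ μH[α - β] ((u ⁻¹' {y} ∩ ⋃ n, K n) ∪ (u ⁻¹' {y} ∩ (A \ ⋃ n, K n))) := by
          refine measure_mono fun x hx => ?_
          by_cases h : x ∈ ⋃ n, K n
          · exact Or.inl ⟨hx.1, h⟩
          · exact Or.inr ⟨hx.1, hx.2, h⟩
      _ ≤ _ := measure_union_le _ _
      _ = _ := by rw [hy, add_zero]
  · exact measure_mono (Set.inter_subset_inter_right _ (Set.iUnion_subset hKA))


/-- (Abstract coarea inequality)  Let `(X, d_X)`, `(Y, d_Y)` be boundedly compact (i.e.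
proper) metric spaces and suppose there are `β ≥ 0` and `C ≥ 0` with
`H^β(E) ≤ C diam(E)^β` for all `E ⊆ Y`.  Let `u : X → Y` be locally Lipschitz and let
`Lip₀(u) = lim_{ε→0} sup { d_Y(u x, u y) / d_X(x, y) : 0 < d_X(x, y) < ε }`.  Then for
every `α ≥ β` and every Borel set `A ⊆ X` with `H^α(A) < ∞`, the function
`y ↦ H^(α-β)(u⁻¹(y) ∩ A)` is `H^β`-measurable and
`∫_Y H^(α-β)(u⁻¹(y) ∩ A) dH^β(y) ≤ C Lip₀(u)^β H^α(A)`. -/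
theorem abstract_coarea_inequality
    {X Y : Type*} [MetricSpace X] [ProperSpace X] [MeasurableSpace X] [BorelSpace X]
    [MetricSpace Y] [ProperSpace Y] [MeasurableSpace Y] [BorelSpace Y]
    (β : ℝ) (hβ : 0 ≤ β) (C : ℝ≥0∞)
    (hC : ∀ E : Set Y, μH[β] E ≤ C * (EMetric.diam E) ^ β)
    (u : X → Y) (hu : LocallyLipschitz u)
    (Lip₀ : ℝ≥0∞)
    (hLip₀ : Lip₀ = ⨅ (ε : ℝ) (_ : 0 < ε),
      ⨆ (x : X) (y : X) (_ : x ≠ y) (_ : dist x y < ε), edist (u x) (u y) / edist x y)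
    (α : ℝ) (hαβ : β ≤ α)
    (A : Set X) (hA : MeasurableSet A) (hAfin : μH[α] A < ⊤) :
    AEMeasurable (fun y : Y => μH[α - β] (u ⁻¹' {y} ∩ A)) μH[β] ∧
    ∫⁻ y, μH[α - β] (u ⁻¹' {y} ∩ A) ∂μH[β] ≤ C * Lip₀ ^ β * μH[α] A := by
  refine ⟨cai_aemeas β hβ u hu α hαβ A hA hAfin, ?_⟩
  have hzero : (∀ᵐ y ∂(μH[β] : Measure Y), μH[α - β] (u ⁻¹' {y} ∩ A) = 0) →
      ∫⁻ y, μH[α - β] (u ⁻¹' {y} ∩ A) ∂μH[β] ≤ C * Lip₀ ^ β * μH[α] A := by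
    intro h
    rw [lintegral_congr_ae (g := fun _ => 0) h]
    simp
  by_cases hA0 : μH[α] A = 0
  · exact hzero (cai_null_loc u hu A α β hβ hαβ hA0)
  by_cases hC0 : C = 0
  · have : (μH[β] : Measure Y) = 0 := by
      rw [← Measure.measure_univ_eq_zero, ← nonpos_iff_eq_zero]
      refine (hC _).trans ?_
      simp [hC0]
    rw [this]; simp
  by_cases hL0 : Lip₀ ^ β = 0
  · rw [ENNReal.rpow_eq_zero_iff] at hL0
    have hL : Lip₀ = 0 ∧ 0 < β := by
      rcases hL0 with h | h
      · exact h
      · exact absurd h.2 (not_lt.2 hβ)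
    exact hzero (cai_null_lip u A α β hL.2 hαβ hAfin (hLip₀ ▸ hL.1))
  by_cases hCt : C = ⊤
  · rw [hCt, ENNReal.top_mul hL0, ENNReal.top_mul hA0]; exact le_top
  by_cases hLt : Lip₀ ^ β = ⊤
  · rw [hLt, ENNReal.mul_top hC0, ENNReal.top_mul hA0]; exact le_top
  have hmain : ∀ D : ℝ≥0∞, Lip₀ ^ β < D → D ≠ ⊤ →
      ∫⁻ y, μH[α - β] (u ⁻¹' {y} ∩ A) ∂μH[β] ≤ C * D * μH[α] A := by
    intro D hD hDt
    refine cai_bound β hβ C hC u α hαβ A hAfin hCt D hDt ?_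
    rcases hβ.eq_or_lt with h0 | hβ0
    · subst h0
      refine ⟨1, one_pos, fun S _ _ => ?_⟩
      simp only [ENNReal.rpow_zero, mul_one] at hD ⊢
      exact hD.le
    · have hlt : Lip₀ < D ^ (1 / β) := by
        have := ENNReal.rpow_lt_rpow hD (z := 1 / β) (by positivity)
        rwa [← ENNReal.rpow_mul, mul_one_div_cancel hβ0.ne', ENNReal.rpow_one] at this
      obtain ⟨ε, hε, h⟩ := cai_lip u (D ^ (1 / β)) (hLip₀ ▸ hlt)
      refine ⟨ε, hε, fun S _ hS => ?_⟩
      calc _ ≤ (D ^ (1 / β) * Metric.ediam S) ^ β := ENNReal.rpow_le_rpow (h S hS) hβ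
        _ = _ := by
          rw [ENNReal.mul_rpow_of_nonneg _ _ hβ, ← ENNReal.rpow_mul,
            one_div_mul_cancel hβ0.ne', ENNReal.rpow_one]
  have hlim : Filter.Tendsto (fun n : ℕ => C * (Lip₀ ^ β + ((n : ℝ≥0∞) + 1)⁻¹) * μH[α] A)
      Filter.atTop (nhds (C * Lip₀ ^ β * μH[α] A)) := by
    have hr0 : Filter.Tendsto (fun n : ℕ => ((n : ℝ≥0∞) + 1)⁻¹) Filter.atTop (nhds 0) := by
      have := (Filter.tendsto_add_atTop_iff_nat 1).2 ENNReal.tendsto_inv_nat_nhds_zero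
      simpa using this
    refine ENNReal.Tendsto.mul_const ?_ (Or.inr hAfin.ne)
    refine ENNReal.Tendsto.const_mul ?_ (Or.inr hCt)
    simpa using hr0.const_add (Lip₀ ^ β)
  refine ge_of_tendsto' hlim fun n => hmain _ ?_ ?_
  · exact ENNReal.lt_add_right hLt (by simp)
  · exact ENNReal.add_ne_top.2 ⟨hLt, by simp⟩
end

section
/- In the Heisenberg group H^n endowed with a rotationally invariant homogeneous distance, for each 1 ≤ k ≤ n there exists a constant c(n,k) > 0 such that for every vertical subgroup P ∈ 𝒯_{H^n,ℝ^k} (topological dimension 2n+1−k), c(n,k) · S^{2n+2-k}⌊P = H_E^{2n+1-k}⌊P, where H_E denotes the Euclidean Hausdorff measure on ℝ^{2n+1} ≅ H^n. -/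
open scoped ENNReal

/-- The `n`-th Heisenberg group in exponential coordinates `(x, y, t) ∈ ℝⁿ × ℝⁿ × ℝ`. -/
abbrev Heis (n : ℕ) : Type := (Fin n → ℝ) × (Fin n → ℝ) × ℝ

/-- The Heisenberg group product. -/
noncomputable def heisMul {n : ℕ} (p q : Heis n) : Heis n :=
  (p.1 + q.1, p.2.1 + q.2.1,
    p.2.2 + q.2.2 + (∑ j, (p.1 j * q.2.1 j - q.1 j * p.2.1 j)) / 2)

/-- The Heisenberg dilations `δ_λ(x,y,t) = (λx, λy, λ²t)`. -/
noncomputable def heisDil {n : ℕ} (lam : ℝ) (p : Heis n) : Heis n :=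
  (lam • p.1, lam • p.2.1, lam ^ 2 * p.2.2)

/-- The squared Euclidean norm of the horizontal component. -/
noncomputable def horSq {n : ℕ} (x y : Fin n → ℝ) : ℝ := ∑ i, (x i ^ 2 + y i ^ 2)

/-- The `d`-dimensional spherical Hausdorff measure associated with a distance function
`ρ`, as a set function: the limit as `ε → 0⁺` of the infimum of `∑ (2 r_j)^d` over
countable coverings by closed `ρ`-balls of radii `r_j` with `2 r_j < ε`. -/
noncomputable def sphMeasFun {X : Type*} (ρ : X → X → ℝ) (d : ℝ) (E : Set X) : ℝ≥0∞ :=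
  ⨆ (ε : ℝ) (_ : 0 < ε),
    ⨅ (c : ℕ → X) (r : ℕ → ℝ)
      (_ : E ⊆ ⋃ m, {x : X | ρ (c m) x ≤ r m}) (_ : ∀ m, 0 < r m ∧ 2 * r m < ε),
      ∑' m, ENNReal.ofReal (2 * r m) ^ d

/-- The diameter, in `ℝ≥0∞`, of a set with respect to a distance function `ρ`. -/
noncomputable def diamFun {X : Type*} (ρ : X → X → ℝ) (s : Set X) : ℝ≥0∞ :=
  ⨆ (x : X) (_ : x ∈ s) (y : X) (_ : y ∈ s), ENNReal.ofReal (ρ x y)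

/-- The `d`-dimensional Hausdorff measure associated with a distance function `ρ`,
as a set function. -/
noncomputable def hausMeasFun {X : Type*} (ρ : X → X → ℝ) (d : ℝ) (E : Set X) : ℝ≥0∞ :=
  ⨆ (ε : ℝ≥0∞) (_ : 0 < ε),
    ⨅ (t : ℕ → Set X) (_ : E ⊆ ⋃ m, t m) (_ : ∀ m, diamFun ρ (t m) < ε),
      ∑' m, diamFun ρ (t m) ^ d

/-- The Euclidean distance on `Heis n ≅ ℝ^(2n+1)`. -/
noncomputable def heisEuclDist {n : ℕ} (p q : Heis n) : ℝ :=
  Real.sqrt (∑ i, (p.1 i - q.1 i) ^ 2 + ∑ i, (p.2.1 i - q.2.1 i) ^ 2 +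
    (p.2.2 - q.2.2) ^ 2)


open MeasureTheory Metric Set

theorem aux_null {α : Type} [PseudoMetricSpace α] [MeasurableSpace α] [BorelSpace α]
    [SecondCountableTopology α] (μ : Measure α) [IsLocallyFiniteMeasure μ] (d : ℕ) (V : ℝ≥0∞)
    (hV0 : V ≠ 0) (hVt : V ≠ ⊤)
    (hball : ∀ x r, 0 < r → μ (closedBall x r) = ENNReal.ofReal r ^ d * V)
    (s : Set α) (hs : μ s = 0) (ε : ℝ) (hε : 0 < ε) (η : ℝ≥0∞) (hη : η ≠ 0) :
    ∃ (u : Set α) (r : α → ℝ), u.Countable ∧ (∀ j ∈ u, 0 < r j ∧ r j < ε) ∧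
      s ⊆ (⋃ j : u, closedBall (j : α) (r j)) ∧ ∑' j : u, ENNReal.ofReal (r j) ^ d ≤ η := by
  have h5 : (ENNReal.ofReal 5) ^ d ≠ 0 := by
    apply pow_ne_zero; simp
  have h5' : (ENNReal.ofReal 5) ^ d ≠ ⊤ := ENNReal.pow_ne_top ENNReal.ofReal_ne_top
  have hη' : η * V / ENNReal.ofReal 5 ^ d ≠ 0 := by
    rw [ENNReal.div_ne_zero]; exact ⟨mul_ne_zero hη hV0, h5'⟩
  obtain ⟨U, hsU, hUo, hU⟩ := s.exists_isOpen_le_add μ hη'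
  rw [hs, zero_add] at hU
  have : ∀ x ∈ s, ∃ r : ℝ, 0 < r ∧ r < ε / 5 ∧ closedBall x r ⊆ U := by
    intro x hx
    obtain ⟨δ, hδ, hδU⟩ := Metric.isOpen_iff.1 hUo x (hsU hx)
    refine ⟨min (δ / 2) (ε / 10), by positivity, ?_, ?_⟩
    · exact (min_le_right _ _).trans_lt (by linarith)
    · exact (closedBall_subset_ball ((min_le_left _ _).trans_lt (by linarith))).trans hδU
  choose! r hr0 hrε hrU using this
  obtain ⟨u, hus, hud, hucov⟩ := Vitali.exists_disjoint_subfamily_covering_enlargement_closedBall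
    s id r (ε / 5) (fun a ha => (hrε a ha).le) 5 (by norm_num)
  have huc : u.Countable := hud.countable_of_nonempty_interior fun a ha =>
    ⟨a, ball_subset_interior_closedBall (mem_ball_self (hr0 a (hus ha)))⟩
  refine ⟨u, fun x => 5 * r x, huc, fun j hj => ⟨by linarith [hr0 j (hus hj)],
    by linarith [hrε j (hus hj)]⟩, ?_, ?_⟩
  · intro x hx
    obtain ⟨b, hb, hxb⟩ := hucov x hx
    exact mem_iUnion.2 ⟨⟨b, hb⟩, hxb (mem_closedBall_self (hr0 x hx).le)⟩
  · have key : ∑' j : u, ENNReal.ofReal (r j) ^ d * V ≤ η * V / ENNReal.ofReal 5 ^ d := by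
      calc ∑' j : u, ENNReal.ofReal (r j) ^ d * V = ∑' j : u, μ (closedBall (j : α) (r j)) := by
            congr 1; ext j; rw [hball _ _ (hr0 _ (hus j.2))]
        _ = μ (⋃ j ∈ u, closedBall j (r j)) :=
            (measure_biUnion huc hud (fun j _ => isClosed_closedBall.measurableSet)).symm
        _ ≤ μ U := measure_mono (iUnion₂_subset fun j hj => hrU j (hus hj))
        _ ≤ _ := hU
    rw [ENNReal.tsum_mul_right, ENNReal.le_div_iff_mul_le (Or.inl h5) (Or.inl h5'),
      mul_right_comm, ENNReal.mul_le_mul_iff_left hV0 hVt, ← ENNReal.tsum_mul_right] at key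
    refine le_trans (le_of_eq ?_) key
    congr 1; ext j
    rw [ENNReal.ofReal_mul (by norm_num), mul_pow, mul_comm]

theorem aux_vit {α : Type} [PseudoMetricSpace α] [MeasurableSpace α] [BorelSpace α]
    [SecondCountableTopology α] (μ : Measure α) [IsLocallyFiniteMeasure μ] (d : ℕ) (V : ℝ≥0∞)
    (hV0 : V ≠ 0) (hVt : V ≠ ⊤)
    (hball : ∀ x r, 0 < r → μ (closedBall x r) = ENNReal.ofReal r ^ d * V)
    (B : α → ℝ → Set α) (K : ℝ) (hK : 0 < K) (b : ℝ≥0∞) (hb0 : b ≠ 0) (hbt : b ≠ ⊤)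
    (hB : ∀ x r, 0 < r → B x r ⊆ closedBall x (K * r))
    (hBμ : ∀ x r, 0 < r → μ (B x r) = ENNReal.ofReal r ^ d * b)
    (hBc : ∀ x r, 0 < r → IsClosed (B x r)) (hBi : ∀ x r, 0 < r → (interior (B x r)).Nonempty)
    (s : Set α) (ε : ℝ) (hε : 0 < ε) (η : ℝ≥0∞) (hη : η ≠ 0) :
    ∃ (u : Set (α × ℝ)) (v : Set α) (r' : α → ℝ), u.Countable ∧ v.Countable ∧
      (∀ j ∈ u, 0 < j.2 ∧ j.2 < ε) ∧ (∀ j ∈ v, 0 < r' j ∧ r' j < ε) ∧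
      s ⊆ (⋃ j : u, B j.1.1 j.1.2) ∪ (⋃ j : v, closedBall (j : α) (r' j)) ∧
      (∑' j : u, ENNReal.ofReal j.1.2 ^ d) * b ≤ μ s + η ∧
      ∑' j : v, ENNReal.ofReal (r' j) ^ d ≤ η := by
  obtain ⟨U, hsU, hUo, hU⟩ := s.exists_isOpen_le_add μ hη
  have hCt : ENNReal.ofReal (3 * K) ^ d * V / b ≠ ⊤ :=
    ENNReal.div_ne_top (ENNReal.mul_ne_top (ENNReal.pow_ne_top ENNReal.ofReal_ne_top) hVt) hb0
  obtain ⟨u, hut, huc, hud, hun⟩ := Vitali.exists_disjoint_covering_ae μ s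
    {j : α × ℝ | 0 < j.2 ∧ j.2 < ε ∧ closedBall j.1 (K * j.2) ⊆ U}
    (ENNReal.ofReal (3 * K) ^ d * V / b).toNNReal (fun j => K * j.2) (fun j => j.1)
    (fun j => B j.1 j.2) (fun j hj => hB _ _ hj.1)
    (by
      intro j hj
      rw [ENNReal.coe_toNNReal hCt, hBμ _ _ hj.1, hball _ _ (by have := hj.1; positivity),
        mul_comm (ENNReal.ofReal j.2 ^ d), ← mul_assoc (_ / b), ENNReal.div_mul_cancel hb0 hbt,
        ← mul_assoc, ENNReal.ofReal_mul (by positivity), mul_pow]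
      apply le_of_eq; ring)
    (fun j hj => hBi _ _ hj.1) (fun j hj => hBc _ _ hj.1)
    (by
      intro x hx e he
      obtain ⟨δ, hδ, hδU⟩ := Metric.isOpen_iff.1 hUo x (hsU hx)
      have h1 : 0 < min (min (δ / (2 * K)) (ε / 2)) (e / K) := by positivity
      refine ⟨(x, min (min (δ / (2 * K)) (ε / 2)) (e / K)), ⟨h1, ?_, ?_⟩, ?_, rfl⟩
      · exact ((min_le_left _ _).trans (min_le_right _ _)).trans_lt (by linarith)
      · refine (closedBall_subset_ball ?_).trans hδU
        have : min (min (δ / (2 * K)) (ε / 2)) (e / K) ≤ δ / (2 * K) :=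
          (min_le_left _ _).trans (min_le_left _ _)
        have := (le_div_iff₀ (by positivity)).1 this
        show K * min (min (δ / (2 * K)) (ε / 2)) (e / K) < δ
        nlinarith
      · have := (le_div_iff₀ hK).1 (min_le_right (min (δ / (2 * K)) (ε / 2)) (e / K))
        show K * min (min (δ / (2 * K)) (ε / 2)) (e / K) ≤ e
        linarith)
  obtain ⟨v, r', hvc, hv, hvcov, hvs⟩ := aux_null μ d V hV0 hVt hball _ hun ε hε η hη
  refine ⟨u, v, r', huc, hvc, fun j hj => ⟨(hut hj).1, (hut hj).2.1⟩, hv, ?_, ?_, hvs⟩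
  · intro x hx
    by_cases hxu : x ∈ ⋃ a ∈ u, B a.1 a.2
    · left
      simpa using hxu
    · right
      exact hvcov ⟨hx, hxu⟩
  · rw [← ENNReal.tsum_mul_right]
    calc ∑' j : u, ENNReal.ofReal j.1.2 ^ d * b = ∑' j : u, μ (B j.1.1 j.1.2) := by
          congr 1; ext j; rw [hBμ _ _ (hut j.2).1]
      _ = μ (⋃ j ∈ u, B j.1 j.2) :=
          (measure_biUnion huc hud (fun j hj => (hBc _ _ (hut hj).1).measurableSet)).symm
      _ ≤ μ U := measure_mono (iUnion₂_subset fun j hj => (hB _ _ (hut hj).1).trans (hut hj).2.2)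
      _ ≤ _ := hU

theorem aux_sph_le {X : Type} [Nonempty X] (ρ : X → X → ℝ) (d : ℝ) (hd : 1 ≤ d) (E : Set X)
    (A : ℝ≥0∞)
    (h : ∀ ε : ℝ, 0 < ε → ∀ η : ℝ≥0∞, η ≠ 0 → ∃ (J : Type) (_ : Countable J) (c : J → X) (r : J → ℝ),
      (E ⊆ ⋃ m, {x : X | ρ (c m) x ≤ r m}) ∧ (∀ m, 0 < r m ∧ 2 * r m < ε) ∧
      ∑' m, ENNReal.ofReal (2 * r m) ^ d ≤ A + η) :
    sphMeasFun ρ d E ≤ A := by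
  unfold sphMeasFun
  refine iSup₂_le fun ε hε => ?_
  refine ENNReal.le_of_forall_pos_le_add fun η hη _ => ?_
  have hη2 : (η : ℝ≥0∞) / 2 ≠ 0 := by simpa using hη.ne'
  obtain ⟨J, hJ, c, r, hcov, hr, hsum⟩ := h ε hε _ hη2
  obtain ⟨δ, hδ, hδs⟩ := ENNReal.exists_pos_sum_of_countable hη2 ℕ
  obtain ⟨e⟩ : Nonempty (ℕ ≃ J ⊕ ℕ) := nonempty_equiv_of_countable
  let x0 : X := Classical.arbitrary X
  let r2 : ℕ → ℝ := fun m => min (δ m : ℝ) (min 1 (ε / 2)) / 2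
  have hr2 : ∀ m, 0 < r2 m := fun m => by
    have := hδ m
    have : (0 : ℝ) < δ m := by exact_mod_cast this
    positivity
  let C : J ⊕ ℕ → X := Sum.elim c (fun _ => x0)
  let R : J ⊕ ℕ → ℝ := Sum.elim r r2
  refine iInf_le_of_le (C ∘ e) (iInf_le_of_le (R ∘ e) (iInf_le_of_le ?_ (iInf_le_of_le ?_ ?_)))
  · intro x hx
    obtain ⟨m, hm⟩ := mem_iUnion.1 (hcov hx)
    refine mem_iUnion.2 ⟨e.symm (Sum.inl m), ?_⟩
    simpa [C, R] using hm
  · intro m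
    simp only [Function.comp]
    rcases e m with j | j
    · exact hr j
    · refine ⟨hr2 j, ?_⟩
      have : min (δ j : ℝ) (min 1 (ε / 2)) ≤ ε / 2 := (min_le_right _ _).trans (min_le_right _ _)
      show 2 * (min (δ j : ℝ) (min 1 (ε / 2)) / 2) < ε
      linarith
  · simp only [Function.comp]
    rw [e.tsum_eq (fun j => ENNReal.ofReal (2 * R j) ^ d)]
    rw [Summable.tsum_sum ENNReal.summable ENNReal.summable]
    have h2 : ∑' m : ℕ, ENNReal.ofReal (2 * R (Sum.inr m)) ^ d ≤ η / 2 := by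
      refine le_trans (ENNReal.tsum_le_tsum fun m => ?_) hδs.le
      have e1 : 2 * R (Sum.inr m) = min (δ m : ℝ) (min 1 (ε / 2)) := by
        show 2 * (min (δ m : ℝ) (min 1 (ε / 2)) / 2) = _
        ring
      rw [e1]
      have h3 : ENNReal.ofReal (min (δ m : ℝ) (min 1 (ε / 2))) ≤ 1 := by
        rw [ENNReal.ofReal_le_one]; exact (min_le_right _ _).trans (min_le_left _ _)
      refine (ENNReal.rpow_le_rpow_of_exponent_ge h3 hd).trans ?_
      rw [ENNReal.rpow_one]
      refine (ENNReal.ofReal_le_ofReal (min_le_left _ _)).trans ?_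
      simp
    calc _ ≤ A + η / 2 + η / 2 := add_le_add hsum h2
      _ = A + η := by rw [add_assoc, ENNReal.add_halves]

theorem aux_haus {X Y : Type} [EMetricSpace Y] [MeasurableSpace Y] [BorelSpace Y]
    (ρ : X → X → ℝ) (j : Y → X) (hj : ∀ a b, ENNReal.ofReal (ρ (j a) (j b)) = edist a b)
    (d : ℝ) (hd : 0 < d) (T : Set Y) :
    hausMeasFun ρ d (j '' T) = Measure.hausdorffMeasure d T := by
  have hsup : ∀ t : Set Y, (⨆ _ : t.Nonempty, ediam t ^ d) = ediam t ^ d := by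
    intro t
    rcases t.eq_empty_or_nonempty with rfl | h
    · simp [hd]
    · simp [h]
  have hdi : ∀ t : Set Y, diamFun ρ (j '' t) = ediam t := by
    intro t
    simp only [diamFun, ediam, iSup_image, hj]
  have hdp : ∀ t : Set X, ediam (j ⁻¹' t) ≤ diamFun ρ t := by
    intro t
    rw [← hdi]
    simp only [diamFun]
    refine iSup₂_le fun x hx => iSup₂_le fun y hy => ?_
    refine le_iSup₂_of_le x (image_preimage_subset _ _ hx) (le_iSup₂_of_le y (image_preimage_subset _ _ hy) le_rfl)
  rw [Measure.hausdorffMeasure_apply]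
  simp only [hsup]
  unfold hausMeasFun
  apply le_antisymm
  · refine iSup₂_le fun ε hε => ?_
    obtain ⟨ε', hε'0, hε'⟩ := exists_between hε
    refine le_iSup₂_of_le ε' hε'0 ?_
    refine le_iInf fun t => le_iInf₂ fun ht hte => ?_
    refine iInf_le_of_le (fun m => j '' t m) (iInf₂_le_of_le ?_ ?_ ?_)
    · rw [← image_iUnion]; exact image_mono ht
    · intro m; rw [hdi]; exact (hte m).trans_lt hε'
    · simp only [hdi]; exact le_rfl
  · refine iSup₂_le fun ε hε => ?_
    refine le_iSup₂_of_le ε hε ?_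
    refine le_iInf fun t => le_iInf₂ fun ht hte => ?_
    refine iInf_le_of_le (fun m => j ⁻¹' t m) (iInf₂_le_of_le ?_ ?_ ?_)
    · rw [← preimage_iUnion]; exact image_subset_iff.1 ht
    · intro m; exact (hdp _).trans (hte m).le
    · exact ENNReal.tsum_le_tsum fun m => ENNReal.rpow_le_rpow (hdp _) hd.le

abbrev EX (m : ℕ) : Type := EuclideanSpace ℝ (Fin m) × ℝ

structure GP (g : ℝ → ℝ → ℝ) (a b : ℝ) : Prop where
  cont : Continuous (fun p : ℝ × ℝ => g p.1 p.2)
  a_pos : 0 < a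
  b_pos : 0 < b
  hom : ∀ l : ℝ, 0 < l → ∀ s t, 0 ≤ s → g (l ^ 2 * s) (l ^ 2 * t) = l * g s t
  lo1 : ∀ s t, 0 ≤ s → a * √s ≤ g s t
  lo2 : ∀ s t, 0 ≤ s → b * √|t| ≤ 2 * g s t
  up : ∀ s t, 0 ≤ s → g s t ≤ a * √s + b * √|t|

noncomputable def MM (g : ℝ → ℝ → ℝ) (m : ℕ) (β r : ℝ) : ℝ≥0∞ :=
  volume {q : EX m | g (‖q.1‖ ^ 2 + β) q.2 ≤ r}

noncomputable def QQ (g : ℝ → ℝ → ℝ) (m : ℕ) : ℝ≥0∞ := ⨆ (β : ℝ) (_ : 0 ≤ β), MM g m β 1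

theorem GP.zero {g : ℝ → ℝ → ℝ} {a b : ℝ} (hg : GP g a b) : g 0 0 = 0 := by
  have h1 := hg.lo1 0 0 le_rfl
  have h2 := hg.up 0 0 le_rfl
  simp at h1 h2
  linarith

theorem GP.closed {g : ℝ → ℝ → ℝ} {a b : ℝ} (hg : GP g a b) (m : ℕ) (β r : ℝ) :
    IsClosed {q : EX m | g (‖q.1‖ ^ 2 + β) q.2 ≤ r} := by
  refine isClosed_le (hg.cont.comp (f := fun q : EX m => (‖q.1‖ ^ 2 + β, q.2)) ?_) continuous_const
  fun_prop

theorem MM_shift {g : ℝ → ℝ → ℝ} {a b : ℝ} (hg : GP g a b) (m : ℕ) (β r : ℝ)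
    (x : EuclideanSpace ℝ (Fin m)) (l : EuclideanSpace ℝ (Fin m) → ℝ) (hl : Continuous l) :
    volume {q : EX m | g (‖q.1 - x‖ ^ 2 + β) (q.2 - l q.1) ≤ r} = MM g m β r := by
  have h : MeasurePreserving (fun q : EX m => (q.1 - x, q.2 - l q.1)) volume volume := by
    refine MeasurePreserving.skew_product (measurePreserving_sub_right volume x)
      (g := fun v t => t - l v) ?_ ?_
    · have : Continuous (Function.uncurry fun (v : EuclideanSpace ℝ (Fin m)) (t : ℝ) => t - l v) := by
        unfold Function.uncurry
        fun_prop
      exact this.measurable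
    · exact Filter.Eventually.of_forall fun v => (measurePreserving_sub_right volume (l v)).map_eq
  exact h.measure_preimage (hg.closed m β r).measurableSet.nullMeasurableSet

theorem MM_scale {g : ℝ → ℝ → ℝ} {a b : ℝ} (hg : GP g a b) (m : ℕ) (β r l : ℝ) (hβ : 0 ≤ β)
    (hl : 0 < l) :
    MM g m (l ^ 2 * β) (l * r) = ENNReal.ofReal l ^ (m + 2) * MM g m β r := by
  let φ : EX m → EX m := Prod.map (fun v => l • v) (fun t => (l ^ 2) • t)
  have hφ : Measurable φ := by
    apply Continuous.measurable; fun_prop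
  have h1 : Measure.map φ volume = (ENNReal.ofReal ((l ^ (m + 2))⁻¹)) • (volume : Measure (EX m)) := by
    rw [Measure.volume_eq_prod]
    rw [← Measure.map_prod_map _ _ (measurable_const_smul l) (measurable_const_smul (l ^ 2)),
      Measure.map_addHaar_smul _ hl.ne', Measure.map_addHaar_smul _ (pow_pos hl 2).ne']
    rw [Measure.prod_smul_left, Measure.prod_smul_right, smul_smul,
      ← ENNReal.ofReal_mul (abs_nonneg _)]
    congr 2
    rw [abs_of_pos (by positivity), abs_of_pos (by positivity)]
    simp
    ring
  have h2 : φ ⁻¹' {q : EX m | g (‖q.1‖ ^ 2 + l ^ 2 * β) q.2 ≤ l * r}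
      = {q : EX m | g (‖q.1‖ ^ 2 + β) q.2 ≤ r} := by
    ext q
    simp only [φ, mem_preimage, mem_ofPred_eq, Prod.map_fst, Prod.map_snd, norm_smul, smul_eq_mul,
      Real.norm_eq_abs, mul_pow, sq_abs]
    rw [← mul_add, hg.hom l hl _ _ (by positivity)]
    exact mul_le_mul_iff_right₀ hl
  unfold MM
  rw [← h2, ← Measure.map_apply hφ (hg.closed m _ _).measurableSet, h1, Measure.smul_apply,
    smul_eq_mul, ← mul_assoc, ← ENNReal.ofReal_pow hl.le, ← ENNReal.ofReal_mul (by positivity),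
    mul_inv_cancel₀ (by positivity), ENNReal.ofReal_one, one_mul]

theorem MM_sub {g : ℝ → ℝ → ℝ} {a b : ℝ} (hg : GP g a b) (m : ℕ) (β r : ℝ) (hβ : 0 ≤ β) :
    MM g m β r ≤ volume (closedBall (0 : EuclideanSpace ℝ (Fin m)) (r / a) ×ˢ
      closedBall (0 : ℝ) ((2 * r / b) ^ 2)) := by
  refine measure_mono fun q hq => ?_
  have hq : g (‖q.1‖ ^ 2 + β) q.2 ≤ r := hq
  have hn : 0 ≤ ‖q.1‖ ^ 2 + β := by positivity
  have h1 := hg.lo1 _ q.2 hn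
  have h2 := hg.lo2 _ q.2 hn
  have ha := hg.a_pos
  have hb := hg.b_pos
  constructor
  · rw [mem_closedBall_zero_iff, le_div_iff₀ ha]
    have : ‖q.1‖ ≤ √(‖q.1‖ ^ 2 + β) := Real.le_sqrt_of_sq_le (by linarith)
    nlinarith
  · rw [mem_closedBall_zero_iff, Real.norm_eq_abs]
    have : √|q.2| ≤ 2 * r / b := by rw [le_div_iff₀ hb]; linarith
    calc |q.2| = √|q.2| ^ 2 := (Real.sq_sqrt (abs_nonneg _)).symm
      _ ≤ _ := by gcongr

theorem QQ_ne_top {g : ℝ → ℝ → ℝ} {a b : ℝ} (hg : GP g a b) (m : ℕ) : QQ g m ≠ ⊤ := by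
  refine ne_top_of_le_ne_top ?_ (iSup₂_le fun β hβ => MM_sub hg m β 1 hβ)
  exact ((isCompact_closedBall _ _).prod (isCompact_closedBall _ _)).measure_lt_top.ne

theorem MM_le_QQ (g : ℝ → ℝ → ℝ) (m : ℕ) (β : ℝ) (hβ : 0 ≤ β) : MM g m β 1 ≤ QQ g m :=
  le_iSup₂_of_le β hβ le_rfl

theorem MM_zero_pos {g : ℝ → ℝ → ℝ} {a b : ℝ} (hg : GP g a b) (m : ℕ) : MM g m 0 1 ≠ 0 := by
  have ho : IsOpen {q : EX m | g (‖q.1‖ ^ 2 + 0) q.2 < 1} := by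
    refine isOpen_lt (hg.cont.comp (f := fun q : EX m => (‖q.1‖ ^ 2 + 0, q.2)) ?_) continuous_const
    fun_prop
  have hne : {q : EX m | g (‖q.1‖ ^ 2 + 0) q.2 < 1}.Nonempty := ⟨0, by simp [hg.zero]⟩
  have := ho.measure_pos volume hne
  refine (this.trans_le (measure_mono fun q hq => ?_)).ne'
  have hq : g (‖q.1‖ ^ 2 + 0) q.2 < 1 := hq
  exact hq.le

theorem core_lower {H : Type} (ρ : H → H → ℝ) (m : ℕ) {g : ℝ → ℝ → ℝ} {a b : ℝ} (hg : GP g a b)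
    (i : EX m → H)
    (h1 : ∀ z, ∃ (x : EuclideanSpace ℝ (Fin m)) (β : ℝ) (l : EuclideanSpace ℝ (Fin m) → ℝ),
      0 ≤ β ∧ Continuous l ∧ ∀ q : EX m, ρ z (i q) = g (‖q.1 - x‖ ^ 2 + β) (q.2 - l q.1))
    (T : Set (EX m)) :
    volume T ≤ (QQ g m / 2 ^ (m + 2)) * sphMeasFun ρ ((m + 2 : ℕ) : ℝ) (i '' T) := by
  have hQt := QQ_ne_top hg m
  have hQ0 : QQ g m ≠ 0 := fun h => MM_zero_pos hg m (le_zero_iff.1 (h ▸ MM_le_QQ g m 0 le_rfl))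
  have h20 : (2 : ℝ≥0∞) ^ (m + 2) ≠ 0 := by simp
  have h2t : (2 : ℝ≥0∞) ^ (m + 2) ≠ ⊤ := by simp
  have hc0 : QQ g m / 2 ^ (m + 2) ≠ 0 := by
    rw [ENNReal.div_ne_zero]; exact ⟨hQ0, h2t⟩
  have hct : QQ g m / 2 ^ (m + 2) ≠ ⊤ := ENNReal.div_ne_top hQt h20
  rw [← ENNReal.div_le_iff' hc0 hct]
  unfold sphMeasFun
  refine le_iSup₂_of_le 1 one_pos ?_
  refine le_iInf fun c => le_iInf fun r => le_iInf₂ fun hcov hr => ?_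
  rw [ENNReal.div_le_iff' hc0 hct]
  have hT : T ⊆ ⋃ j, {q : EX m | ρ (c j) (i q) ≤ r j} := by
    intro q hq
    obtain ⟨j, hj⟩ := mem_iUnion.1 (hcov (mem_image_of_mem i hq))
    exact mem_iUnion.2 ⟨j, hj⟩
  refine (measure_mono hT).trans ((measure_iUnion_le _).trans ?_)
  rw [← ENNReal.tsum_mul_left]
  refine ENNReal.tsum_le_tsum fun j => ?_
  obtain ⟨x, β, l, hβ, hl, hz⟩ := h1 (c j)
  simp only [hz]
  rw [MM_shift hg m β (r j) x l hl]
  have hrj := (hr j).1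
  have e1 : MM g m β (r j) = ENNReal.ofReal (r j) ^ (m + 2) * MM g m (β / r j ^ 2) 1 := by
    rw [← MM_scale hg m _ _ _ (by positivity) hrj, mul_one, mul_div_cancel₀ _ (by positivity)]
  rw [e1, ENNReal.rpow_natCast, ENNReal.ofReal_mul (by norm_num), mul_pow, ← mul_assoc,
    ENNReal.ofReal_ofNat, ENNReal.div_mul_cancel h20 h2t, mul_comm]
  gcongr
  exact MM_le_QQ g m _ (by positivity)

theorem core_upper {H : Type} [Nonempty H] (ρ : H → H → ℝ) (hrefl : ∀ p, ρ p p = 0)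
    (hsymm : ∀ p q, ρ p q = ρ q p) (htri : ∀ p q r, ρ p r ≤ ρ p q + ρ q r)
    (m : ℕ) {g : ℝ → ℝ → ℝ} {a b : ℝ} (hg : GP g a b)
    (i : EX m → H)
    (h2 : ∀ x : EX m, ∃ (l : EuclideanSpace ℝ (Fin m) → ℝ), Continuous l ∧ l x.1 = x.2 ∧
      ∀ q : EX m, ρ (i x) (i q) = g (‖q.1 - x.1‖ ^ 2) (q.2 - l q.1))
    (h3 : ∀ (x : EX m) (β : ℝ), 0 ≤ β → ∃ (z : H) (l : EuclideanSpace ℝ (Fin m) → ℝ),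
      Continuous l ∧ ρ (i x) z = g β 0 ∧
      ∀ q : EX m, ρ z (i q) = g (‖q.1 - x.1‖ ^ 2 + β) (q.2 - l q.1))
    (T : Set (EX m)) (hT : volume T ≠ ⊤) (β : ℝ) (hβ : 0 ≤ β) (hM : MM g m β 1 ≠ 0)
    (R : ℝ) (hR : 1 < R) :
    sphMeasFun ρ ((m + 2 : ℕ) : ℝ) (i '' T)
      ≤ ENNReal.ofReal R ^ (m + 2) * (2 ^ (m + 2) * volume T / MM g m β 1) := by
  have hcontz : ∀ (x : EuclideanSpace ℝ (Fin m)) (β : ℝ) (l : EuclideanSpace ℝ (Fin m) → ℝ),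
      Continuous l → Continuous fun q : EX m => g (‖q.1 - x‖ ^ 2 + β) (q.2 - l q.1) := by
    intro x β l hl
    exact hg.cont.comp (f := fun q : EX m => (‖q.1 - x‖ ^ 2 + β, q.2 - l q.1)) (by fun_prop)
  have htop : ∀ s : Set (EX m), IsOpen s ↔ ∀ x ∈ s, ∃ ε > 0, ∀ y, ρ (i x) (i y) < ε → y ∈ s := by
    intro s
    constructor
    · intro hs x hx
      obtain ⟨l, hl, hlx, hq⟩ := h2 x
      let k : EX m → EX m := fun u => (u.1 + x.1, u.2 + l (u.1 + x.1))
      have hk : Continuous k := by fun_prop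
      have hk0 : (0 : EX m) ∈ k ⁻¹' s := by
        show ((0 : EuclideanSpace ℝ (Fin m)) + x.1, (0 : ℝ) + l (0 + x.1)) ∈ s
        rw [zero_add, zero_add, hlx]; exact hx
      obtain ⟨δ, hδ, hδs⟩ := Metric.isOpen_iff.1 (hs.preimage hk) 0 hk0
      have ha := hg.a_pos
      have hb := hg.b_pos
      refine ⟨min (a * δ) (b * √δ / 2), by positivity, fun y hy => ?_⟩
      rw [hq] at hy
      have l1 := hg.lo1 (‖y.1 - x.1‖ ^ 2) (y.2 - l y.1) (by positivity)
      have l2 := hg.lo2 (‖y.1 - x.1‖ ^ 2) (y.2 - l y.1) (by positivity)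
      have y1 := hy.trans_le (min_le_left _ _)
      have y2 := hy.trans_le (min_le_right _ _)
      rw [Real.sqrt_sq (norm_nonneg _)] at l1
      have z1 : ‖y.1 - x.1‖ < δ := lt_of_mul_lt_mul_left (l1.trans_lt y1) ha.le
      have z2 : √|y.2 - l y.1| < √δ := lt_of_mul_lt_mul_left (by linarith : b * _ < b * _) hb.le
      have z3 : |y.2 - l y.1| < δ := lt_of_not_ge fun h => (Real.sqrt_le_sqrt h).not_gt z2
      have : (y.1 - x.1, y.2 - l y.1) ∈ k ⁻¹' s := by
        apply hδs
        rw [mem_ball_zero_iff, Prod.norm_def]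
        exact max_lt z1 z3
      have e : k (y.1 - x.1, y.2 - l y.1) = y := by
        simp [k]
      rw [mem_preimage, e] at this
      exact this
    · intro h
      rw [isOpen_iff_mem_nhds]
      intro x hx
      obtain ⟨ε, hε, hy⟩ := h x hx
      obtain ⟨l, hl, hlx, hq⟩ := h2 x
      have ho : IsOpen {y : EX m | ρ (i x) (i y) < ε} := by
        simp only [hq]
        have := hcontz x.1 0 l hl
        simp only [add_zero] at this
        exact isOpen_lt this continuous_const
      refine Filter.mem_of_superset (ho.mem_nhds ?_) hy
      show ρ (i x) (i x) < ε
      rw [hrefl]; exact hε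
  choose! z l hl hz0 hz using h3
  have hRp : 0 < R := by linarith
  have hvol : ∀ x r r', 0 < r → volume {q : EX m | ρ (z x (r ^ 2 * β)) (i q) ≤ r * r'}
      = ENNReal.ofReal r ^ (m + 2) * MM g m β r' := by
    intro x r r' hr
    have hb : 0 ≤ r ^ 2 * β := by positivity
    simp only [hz x _ hb]
    rw [MM_shift hg m _ _ _ _ (hl x _ hb), MM_scale hg m _ _ _ hβ hr]
  have hMmono : MM g m β 1 ≤ MM g m β R := measure_mono fun q (hq : _ ≤ _) => hq.trans hR.le
  have hvit := @aux_vit (EX m)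
    (PseudoMetricSpace.ofDistTopology (fun p q => ρ (i p) (i q)) (fun _ => hrefl _)
      (fun _ _ => hsymm _ _) (fun _ _ _ => htri _ _ _) htop) _
    (inferInstanceAs (BorelSpace (EX m))) (inferInstanceAs (SecondCountableTopology (EX m)))
    volume (inferInstanceAs (IsLocallyFiniteMeasure (volume : Measure (EX m)))) (m + 2)
    (MM g m 0 1) (MM_zero_pos hg m) (ne_top_of_le_ne_top (QQ_ne_top hg m) (MM_le_QQ g m 0 le_rfl))
    (by
      intro x r hr
      obtain ⟨l, hl, hlx, hq⟩ := h2 x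
      have := MM_scale hg m 0 1 r le_rfl hr
      rw [← this, mul_zero, mul_one, ← MM_shift hg m 0 r x.1 l hl]
      congr 1
      ext q
      show ρ (i q) (i x) ≤ r ↔ g (‖q.1 - x.1‖ ^ 2 + 0) (q.2 - l q.1) ≤ r
      rw [hsymm, hq, add_zero])
    (fun x r => {q : EX m | ρ (z x (r ^ 2 * β)) (i q) ≤ r * R}) (g β 0 + R)
    (by
      have := hg.lo1 β 0 hβ
      have : 0 ≤ a * √β := mul_nonneg hg.a_pos.le (Real.sqrt_nonneg _)
      linarith)
    (MM g m β R) (fun h => hM (le_zero_iff.1 (h ▸ hMmono)))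
    (ne_top_of_le_ne_top (((isCompact_closedBall _ _).prod (isCompact_closedBall _ _)).measure_lt_top.ne) (MM_sub hg m β R hβ))
    (by
      intro x r hr q hq
      show ρ (i q) (i x) ≤ (g β 0 + R) * r
      have hq : ρ (z x (r ^ 2 * β)) (i q) ≤ r * R := hq
      have h4 := hz0 x (r ^ 2 * β) (by positivity)
      have h5 := hg.hom r hr β 0 hβ
      rw [mul_zero] at h5
      rw [hsymm]
      have := htri (i x) (z x (r ^ 2 * β)) (i q)
      linarith)
    (fun x r hr => hvol x r R hr)
    (by
      intro x r hr
      simp only [hz x _ (by positivity : 0 ≤ r ^ 2 * β)]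
      exact isClosed_le (hcontz _ _ _ (hl x _ (by positivity))) continuous_const)
    (by
      intro x r hr
      have hne : {q : EX m | ρ (z x (r ^ 2 * β)) (i q) ≤ r * 1}.Nonempty := by
        apply nonempty_of_measure_ne_zero (μ := volume)
        rw [hvol x r 1 hr]
        refine mul_ne_zero (pow_ne_zero _ ?_) hM
        simpa using hr
      obtain ⟨q, hq⟩ := hne
      have hq : ρ (z x (r ^ 2 * β)) (i q) ≤ r * 1 := hq
      have ho : IsOpen {q : EX m | ρ (z x (r ^ 2 * β)) (i q) < r * R} := by
        simp only [hz x _ (by positivity : 0 ≤ r ^ 2 * β)]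
        exact isOpen_lt (hcontz _ _ _ (hl x _ (by positivity))) continuous_const
      refine ⟨q, mem_interior.2 ⟨_, ?_, ho, ?_⟩⟩
      · intro y hy
        exact le_of_lt (show ρ (z x (r ^ 2 * β)) (i y) < r * R from hy)
      · show ρ (z x (r ^ 2 * β)) (i q) < r * R
        nlinarith)
    T
  have h20 : (2 : ℝ≥0∞) ^ (m + 2) ≠ 0 := by simp
  have h2t : (2 : ℝ≥0∞) ^ (m + 2) ≠ ⊤ := by simp
  have hMt : MM g m β 1 ≠ ⊤ := ne_top_of_le_ne_top (QQ_ne_top hg m) (MM_le_QQ g m β hβ)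
  apply aux_sph_le
  · push_cast; linarith [(Nat.cast_nonneg m : (0 : ℝ) ≤ m)]
  intro ε hε η hη
  set C : ℝ≥0∞ := ENNReal.ofReal R ^ (m + 2) * 2 ^ (m + 2) / MM g m β 1 + 2 ^ (m + 2) with hC
  have hC0 : C ≠ 0 := by rw [hC]; simp
  have hCt : C ≠ ⊤ := by
    rw [hC]
    refine ENNReal.add_ne_top.2 ⟨ENNReal.div_ne_top (ENNReal.mul_ne_top ?_ h2t) hM, h2t⟩
    exact ENNReal.pow_ne_top ENNReal.ofReal_ne_top
  have hη' : η / C ≠ 0 := by rw [ENNReal.div_ne_zero]; exact ⟨hη, hCt⟩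
  obtain ⟨u, v, r', huc, hvc, hu, hv, hcov, hsu, hsv⟩ := hvit (ε / (2 * R)) (by positivity) (η / C) hη'
  have := huc.to_subtype
  have := hvc.to_subtype
  refine ⟨u ⊕ v, inferInstance, Sum.elim (fun j => z j.1.1 (j.1.2 ^ 2 * β)) (fun j => i j),
    Sum.elim (fun j => j.1.2 * R) (fun j => r' j), ?_, ?_, ?_⟩
  · rintro _ ⟨q, hq, rfl⟩
    rcases hcov hq with h | h
    · obtain ⟨j, hj⟩ := mem_iUnion.1 h
      exact mem_iUnion.2 ⟨Sum.inl j, hj⟩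
    · obtain ⟨j, hj⟩ := mem_iUnion.1 h
      refine mem_iUnion.2 ⟨Sum.inr j, ?_⟩
      show ρ (i j) (i q) ≤ r' j
      rw [hsymm]; exact hj
  · rintro (j | j)
    · have h6 := hu j j.2
      have h7 := (lt_div_iff₀ (by positivity)).1 h6.2
      have := h6.1
      refine ⟨?_, ?_⟩
      · show 0 < j.1.2 * R
        positivity
      · show 2 * (j.1.2 * R) < ε
        linarith
    · have h6 := hv j j.2
      have h7 := (lt_div_iff₀ (by positivity)).1 h6.2
      refine ⟨h6.1, ?_⟩
      show 2 * r' j < ε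
      nlinarith
  · rw [Summable.tsum_sum ENNReal.summable ENNReal.summable]
    simp only [Sum.elim_inl, Sum.elim_inr, ENNReal.rpow_natCast]
    have s1 : ∑' j : u, ENNReal.ofReal (2 * (j.1.2 * R)) ^ (m + 2)
        ≤ ENNReal.ofReal R ^ (m + 2) * 2 ^ (m + 2) / MM g m β 1 * (volume T + η / C) := by
      have : ∀ j : u, ENNReal.ofReal (2 * (j.1.2 * R)) ^ (m + 2)
          = ENNReal.ofReal R ^ (m + 2) * 2 ^ (m + 2) * ENNReal.ofReal j.1.2 ^ (m + 2) := by
        intro j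
        rw [ENNReal.ofReal_mul (by norm_num), ENNReal.ofReal_mul (hu j j.2).1.le,
          ENNReal.ofReal_ofNat]
        ring
      simp only [this]
      rw [ENNReal.tsum_mul_left, div_eq_mul_inv, mul_assoc _ (MM g m β 1)⁻¹]
      gcongr
      rw [mul_comm, ← div_eq_mul_inv, ENNReal.le_div_iff_mul_le (Or.inl hM) (Or.inl hMt)]
      refine le_trans ?_ hsu
      gcongr
    have s2 : ∑' j : v, ENNReal.ofReal (2 * r' j) ^ (m + 2) ≤ 2 ^ (m + 2) * (η / C) := by
      have : ∀ j : v, ENNReal.ofReal (2 * r' j) ^ (m + 2)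
          = 2 ^ (m + 2) * ENNReal.ofReal (r' j) ^ (m + 2) := by
        intro j
        rw [ENNReal.ofReal_mul (by norm_num), ENNReal.ofReal_ofNat, mul_pow]
      simp only [this]
      rw [ENNReal.tsum_mul_left]
      gcongr
    refine (add_le_add s1 s2).trans (le_of_eq ?_)
    rw [mul_add, add_assoc, ← add_mul, ← hC, ENNReal.mul_div_cancel hC0 hCt]
    congr 1
    simp only [div_eq_mul_inv]
    ring

theorem core {H : Type} [Nonempty H] (ρ : H → H → ℝ) (hrefl : ∀ p, ρ p p = 0)
    (hsymm : ∀ p q, ρ p q = ρ q p) (htri : ∀ p q r, ρ p r ≤ ρ p q + ρ q r)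
    (m : ℕ) {g : ℝ → ℝ → ℝ} {a b : ℝ} (hg : GP g a b)
    (i : EX m → H)
    (h1 : ∀ z, ∃ (x : EuclideanSpace ℝ (Fin m)) (β : ℝ) (l : EuclideanSpace ℝ (Fin m) → ℝ),
      0 ≤ β ∧ Continuous l ∧ ∀ q : EX m, ρ z (i q) = g (‖q.1 - x‖ ^ 2 + β) (q.2 - l q.1))
    (h2 : ∀ x : EX m, ∃ (l : EuclideanSpace ℝ (Fin m) → ℝ), Continuous l ∧ l x.1 = x.2 ∧
      ∀ q : EX m, ρ (i x) (i q) = g (‖q.1 - x.1‖ ^ 2) (q.2 - l q.1))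
    (h3 : ∀ (x : EX m) (β : ℝ), 0 ≤ β → ∃ (z : H) (l : EuclideanSpace ℝ (Fin m) → ℝ),
      Continuous l ∧ ρ (i x) z = g β 0 ∧
      ∀ q : EX m, ρ z (i q) = g (‖q.1 - x.1‖ ^ 2 + β) (q.2 - l q.1))
    (T : Set (EX m)) :
    (QQ g m / 2 ^ (m + 2)) * sphMeasFun ρ ((m + 2 : ℕ) : ℝ) (i '' T) = volume T := by
  refine le_antisymm ?_ (core_lower ρ m hg i h1 T)
  by_cases hT : volume T = ⊤
  · rw [hT]; exact le_top
  have h20 : (2 : ℝ≥0∞) ^ (m + 2) ≠ 0 := by simp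
  have h2t : (2 : ℝ≥0∞) ^ (m + 2) ≠ ⊤ := by simp
  have key : ∀ β, 0 ≤ β → MM g m β 1 * sphMeasFun ρ ((m + 2 : ℕ) : ℝ) (i '' T)
      ≤ 2 ^ (m + 2) * volume T := by
    intro β hβ
    by_cases hM : MM g m β 1 = 0
    · simp [hM]
    have hMt : MM g m β 1 ≠ ⊤ := ne_top_of_le_ne_top (QQ_ne_top hg m) (MM_le_QQ g m β hβ)
    rw [mul_comm, ← ENNReal.le_div_iff_mul_le (Or.inl hM) (Or.inl hMt)]
    have hA : 2 ^ (m + 2) * volume T / MM g m β 1 ≠ ⊤ :=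
      ENNReal.div_ne_top (ENNReal.mul_ne_top h2t hT) hM
    have hlim : Filter.Tendsto (fun R : ℝ => ENNReal.ofReal R ^ (m + 2) *
        (2 ^ (m + 2) * volume T / MM g m β 1)) (nhdsWithin 1 (Ioi 1))
        (nhds (ENNReal.ofReal 1 ^ (m + 2) * (2 ^ (m + 2) * volume T / MM g m β 1))) := by
      refine Filter.Tendsto.mono_left ?_ nhdsWithin_le_nhds
      refine Continuous.tendsto ?_ _
      exact (ENNReal.continuous_mul_const hA).comp
        ((ENNReal.continuous_pow _).comp ENNReal.continuous_ofReal)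
    rw [ENNReal.ofReal_one, one_pow, one_mul] at hlim
    refine ge_of_tendsto hlim ?_
    filter_upwards [self_mem_nhdsWithin] with R hR
    exact core_upper ρ hrefl hsymm htri m hg i h2 h3 T hT β hβ hM R hR
  rw [mul_comm, ← mul_div_assoc, ENNReal.div_le_iff h20 h2t, mul_comm (volume T)]
  unfold QQ
  simp only [ENNReal.mul_iSup]
  refine iSup₂_le fun β hβ => ?_
  rw [mul_comm]; exact key β hβ

theorem haus_const (m : ℕ) : ∃ κ : ℝ≥0∞, κ ≠ 0 ∧ κ ≠ ⊤ ∧ ∀ T : Set (EX m),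
    Measure.hausdorffMeasure ((m + 1 : ℕ) : ℝ)
      ((WithLp.ofLp : WithLp 2 (EuclideanSpace ℝ (Fin m) × ℝ) → EX m) ⁻¹' T) = κ * volume T := by
  let e := WithLp.prodContinuousLinearEquiv 2 ℝ (EuclideanSpace ℝ (Fin m)) ℝ
  have hfr : Module.finrank ℝ (WithLp 2 (EuclideanSpace ℝ (Fin m) × ℝ)) = m + 1 := by
    rw [e.toLinearEquiv.finrank_eq]; simp
  let μ : Measure (WithLp 2 (EuclideanSpace ℝ (Fin m) × ℝ)) :=
    Measure.hausdorffMeasure ((m + 1 : ℕ) : ℝ)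
  have hμ : Measure.IsAddHaarMeasure μ := by
    have := isAddHaarMeasure_hausdorffMeasure (E := WithLp 2 (EuclideanSpace ℝ (Fin m) × ℝ))
    rw [hfr] at this
    exact this
  have hν : Measure.IsAddHaarMeasure (Measure.map e μ) := e.isAddHaarMeasure_map μ
  have hvv : Measure.IsAddHaarMeasure (volume : Measure (EX m)) :=
    Measure.prod.instIsAddHaarMeasure _ _
  refine ⟨Measure.addHaarScalarFactor (Measure.map e μ) volume, ?_, ENNReal.coe_ne_top, fun T => ?_⟩
  · exact_mod_cast (Measure.addHaarScalarFactor_pos_of_isAddHaarMeasure (Measure.map e μ) volume).ne'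
  · have h1 := Measure.isAddLeftInvariant_eq_smul (Measure.map e μ) (volume : Measure (EX m))
    have h2 : Measure.map e μ T = μ (e ⁻¹' T) :=
      MeasurableEquiv.map_apply (e.toHomeomorph.toMeasurableEquiv) T
    have h3 := congrArg (fun ν => ν T) h1
    simp only [h2, Measure.smul_apply] at h3
    exact h3

noncomputable def om {n : ℕ} (p q : (Fin n → ℝ) × (Fin n → ℝ)) : ℝ := (∑ j, (p.1 j * q.2 j - q.1 j * p.2 j)) / 2

theorem om_self {n : ℕ} (p : (Fin n → ℝ) × (Fin n → ℝ)) : om p p = 0 := by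
  simp [om]

theorem om_add {n : ℕ} (p q r : (Fin n → ℝ) × (Fin n → ℝ)) : om p (q + r) = om p q + om p r := by
  unfold om
  rw [← add_div, ← Finset.sum_add_distrib]
  congr 1
  refine Finset.sum_congr rfl fun j _ => ?_
  simp only [Prod.fst_add, Prod.snd_add, Pi.add_apply]
  ring

theorem horSq_smul {n : ℕ} (c : ℝ) (x y : Fin n → ℝ) :
    horSq (c • x) (c • y) = c ^ 2 * horSq x y := by
  unfold horSq
  rw [Finset.mul_sum]
  refine Finset.sum_congr rfl fun j _ => ?_
  simp only [Pi.smul_apply, smul_eq_mul]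
  ring

theorem geom (n k : ℕ) (hk : 1 ≤ k) (hkn : k ≤ n)
    (P₀ : Submodule ℝ ((Fin n → ℝ) × (Fin n → ℝ))) (m : ℕ) (hm : m = 2 * n - k)
    (hP : Module.finrank ℝ P₀ = m) :
    ∃ J : EuclideanSpace ℝ (Fin m) →ₗ[ℝ] (Fin n → ℝ) × (Fin n → ℝ),
      (∀ w, w ∈ P₀ ↔ ∃ v, J v = w) ∧
      (∀ v, horSq (J v).1 (J v).2 = ‖v‖ ^ 2) ∧
      (∀ w, ∃ a w', w = J a + w' ∧
        ∀ v, horSq (J v - w').1 (J v - w').2 = ‖v‖ ^ 2 + horSq w'.1 w'.2) ∧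
      (∀ β : ℝ, 0 ≤ β → ∃ w', horSq w'.1 w'.2 = β ∧
        ∀ v, horSq (J v - w').1 (J v - w').2 = ‖v‖ ^ 2 + horSq w'.1 w'.2) := by
  let L : EuclideanSpace ℝ (Fin n ⊕ Fin n) ≃ₗ[ℝ] (Fin n → ℝ) × (Fin n → ℝ) :=
    (WithLp.linearEquiv 2 ℝ (Fin n ⊕ Fin n → ℝ)).trans
      (LinearEquiv.sumArrowLequivProdArrow (Fin n) (Fin n) ℝ ℝ)
  have hL : ∀ w, horSq (L w).1 (L w).2 = ‖w‖ ^ 2 := by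
    intro w
    rw [EuclideanSpace.norm_sq_eq, Fintype.sum_sum_type, horSq, Finset.sum_add_distrib]
    simp only [Real.norm_eq_abs, sq_abs]
    rfl
  let P : Submodule ℝ (EuclideanSpace ℝ (Fin n ⊕ Fin n)) := P₀.comap L.toLinearMap
  have hPf : Module.finrank ℝ P = m := by
    rw [← hP]
    exact (LinearEquiv.ofSubmodule' L P₀).finrank_eq
  let bs := (stdOrthonormalBasis ℝ P).reindex (finCongr hPf)
  let U : EuclideanSpace ℝ (Fin m) →ₗᵢ[ℝ] EuclideanSpace ℝ (Fin n ⊕ Fin n) :=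
    P.subtypeₗᵢ.comp bs.repr.symm.toLinearIsometry
  have hUP : ∀ v, U v ∈ P := fun v => (bs.repr.symm v).2
  have hUs : ∀ w ∈ P, ∃ v, U v = w := fun w hw => ⟨bs.repr ⟨w, hw⟩, by
    show ((bs.repr.symm (bs.repr ⟨w, hw⟩) : P) : EuclideanSpace ℝ (Fin n ⊕ Fin n)) = w
    simp⟩
  have horth : ∀ w' ∈ Pᗮ, ∀ v, horSq (L (U v) - L w').1 (L (U v) - L w').2
      = ‖v‖ ^ 2 + horSq (L w').1 (L w').2 := by
    intro w' hw' v
    rw [← map_sub, hL, hL, ← U.norm_map v]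
    have := (Submodule.mem_orthogonal P w').1 hw' (U v) (hUP v)
    rw [sq, sq, sq]
    exact norm_sub_sq_eq_norm_sq_add_norm_sq_real this
  refine ⟨L.toLinearMap.comp U.toLinearMap, ?_, ?_, ?_, ?_⟩
  · intro w
    constructor
    · intro hw
      obtain ⟨v, hv⟩ := hUs (L.symm w) (by
        show L (L.symm w) ∈ P₀
        simpa using hw)
      exact ⟨v, by show L (U v) = w; rw [hv]; simp⟩
    · rintro ⟨v, rfl⟩
      exact hUP v
  · intro v
    show horSq (L (U v)).1 (L (U v)).2 = _
    rw [hL, U.norm_map]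
  · intro w
    obtain ⟨y, hy, z, hz, hyz⟩ := Submodule.exists_add_mem_mem_orthogonal (K := P) (L.symm w)
    obtain ⟨v, rfl⟩ := hUs y hy
    refine ⟨v, L z, ?_, horth z hz⟩
    show w = L (U v) + L z
    rw [← map_add, ← hyz]; simp
  · intro β hβ
    have hfo := Submodule.finrank_add_finrank_orthogonal P
    have hW : Module.finrank ℝ (EuclideanSpace ℝ (Fin n ⊕ Fin n)) = n + n := by simp
    rw [hPf, hW] at hfo
    have hne : Pᗮ ≠ ⊥ := by
      intro h
      rw [h, finrank_bot] at hfo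
      omega
    obtain ⟨z, hz, hz0⟩ := Submodule.exists_mem_ne_zero_of_ne_bot hne
    refine ⟨L ((√β / ‖z‖) • z), ?_, horth _ (Pᗮ.smul_mem _ hz)⟩
    rw [hL, norm_smul, Real.norm_eq_abs, abs_of_nonneg (by positivity),
      div_mul_cancel₀ _ (norm_ne_zero_iff.2 hz0), Real.sq_sqrt hβ]

theorem gmain (n : ℕ) (hn : 1 ≤ n)
    (ρ : Heis n → Heis n → ℝ)
    (hρ_zero : ∀ p q : Heis n, ρ p q = 0 ↔ p = q)
    (hρ_symm : ∀ p q : Heis n, ρ p q = ρ q p)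
    (hρ_triangle : ∀ p q r : Heis n, ρ p r ≤ ρ p q + ρ q r)
    (hρ_left : ∀ g p q : Heis n, ρ (heisMul g p) (heisMul g q) = ρ p q)
    (hρ_hom : ∀ lam : ℝ, 0 < lam → ∀ p q : Heis n,
      ρ (heisDil lam p) (heisDil lam q) = lam * ρ p q)
    (hρ_rot : ∀ (x y x' y' : Fin n → ℝ) (t : ℝ), horSq x y = horSq x' y' →
      ρ 0 (x, y, t) = ρ 0 (x', y', t)) :
    ∃ (g : ℝ → ℝ → ℝ) (a b : ℝ), GP g a b ∧ ∀ p q : Heis n,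
      ρ p q = g (horSq (q.1 - p.1) (q.2.1 - p.2.1))
        (q.2.2 - p.2.2 - om (p.1, p.2.1) (q.1, q.2.1)) := by
  have hn0 : (0 : ℝ) < n := by exact_mod_cast hn
  let g : ℝ → ℝ → ℝ := fun s t => ρ 0 (fun _ => √(s / n), 0, t)
  have hsq0 : ∀ x y : Fin n → ℝ, 0 ≤ horSq x y := fun x y =>
    Finset.sum_nonneg fun i _ => by positivity
  have hgsq : ∀ s : ℝ, 0 ≤ s → horSq (fun _ : Fin n => √(s / n)) 0 = s := by
    intro s hs
    simp only [horSq, Pi.zero_apply]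
    rw [Finset.sum_const, Real.sq_sqrt (by positivity)]
    simp
    field_simp
  have hgN : ∀ x y t, ρ 0 (x, y, t) = g (horSq x y) t := by
    intro x y t
    exact hρ_rot _ _ _ _ _ (hgsq _ (hsq0 x y)).symm
  have hmul : ∀ p q : Heis n, heisMul (-p) q = (q.1 - p.1, q.2.1 - p.2.1,
      q.2.2 - p.2.2 - om (p.1, p.2.1) (q.1, q.2.1)) := by
    intro p q
    unfold heisMul om
    refine Prod.ext (by simp; abel) (Prod.ext (by simp; abel) ?_)
    have : ∑ j, ((-p).1 j * q.2.1 j - q.1 j * (-p).2.1 j)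
        = - ∑ j, (p.1 j * q.2.1 j - q.1 j * p.2.1 j) := by
      rw [← Finset.sum_neg_distrib]
      refine Finset.sum_congr rfl fun j _ => ?_
      simp; ring
    simp only [this]
    simp
    ring
  have hF : ∀ p q : Heis n, ρ p q = g (horSq (q.1 - p.1) (q.2.1 - p.2.1))
        (q.2.2 - p.2.2 - om (p.1, p.2.1) (q.1, q.2.1)) := by
    intro p q
    rw [← hρ_left (-p) p q, hmul p q, hmul p p, ← hgN]
    congr 1
    simp [om_self]
  have hnn : ∀ p q, 0 ≤ ρ p q := by
    intro p q
    have h1 := hρ_triangle p q p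
    rw [(hρ_zero p p).2 rfl, hρ_symm q p] at h1
    linarith
  have hg0 : ∀ s t, 0 ≤ g s t := fun s t => hnn _ _
  have hgz : g 0 0 = 0 := by
    have := hgN 0 0 0
    rw [show horSq (0 : Fin n → ℝ) 0 = 0 by simp [horSq]] at this
    rw [← this]; exact (hρ_zero _ _).2 rfl
  have hhom : ∀ l : ℝ, 0 < l → ∀ s t, 0 ≤ s → g (l ^ 2 * s) (l ^ 2 * t) = l * g s t := by
    intro l hl s t hs
    show _ = l * ρ 0 _
    rw [← hρ_hom l hl]
    have h0 : heisDil l (0 : Heis n) = 0 := by simp [heisDil]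
    rw [h0]
    unfold heisDil
    rw [hgN]
    congr 1
    have := hgsq s hs
    simp only [horSq, Pi.zero_apply, Pi.smul_apply, smul_eq_mul] at this ⊢
    rw [← this, Finset.mul_sum]
    refine Finset.sum_congr rfl fun j _ => ?_
    simp only [this]
    ring
  have hneg : ∀ s t, 0 ≤ s → g s (-t) = g s t := by
    intro s t hs
    have h1 := hgN (-(fun _ => √(s / n))) 0 (-t)
    have h2 : horSq (-(fun _ : Fin n => √(s / n))) 0 = s := by
      have := horSq_smul (-1) (fun _ : Fin n => √(s / n)) 0
      rw [hgsq s hs] at this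
      simpa using this
    rw [h2] at h1
    rw [← h1, hρ_symm]
    have h3 := hF (-(fun _ => √(s / n)), 0, -t) 0
    rw [h3]
    congr 1
    · simpa using hgsq s hs
    · simp [om]
  have hNmul : ∀ p q : Heis n, ρ 0 (heisMul p q) ≤ ρ 0 p + ρ 0 q := by
    intro p q
    refine (hρ_triangle 0 p _).trans ?_
    have : heisMul p 0 = p := by simp [heisMul]
    have h := hρ_left p 0 q
    rw [this] at h
    rw [h]
  have hs0 : ∀ s, 0 ≤ s → g s 0 = g 1 0 * √s := by
    intro s hs
    rcases hs.eq_or_lt with rfl | hs'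
    · simp [hgz]
    · have := hhom (√s) (Real.sqrt_pos.2 hs') 1 0 zero_le_one
      rw [Real.sq_sqrt hs, mul_one, mul_zero] at this
      rw [this, mul_comm]
  have h0t' : ∀ t, 0 ≤ t → g 0 t = g 0 1 * √t := by
    intro t ht
    rcases ht.eq_or_lt with rfl | ht'
    · simp [hgz]
    · have := hhom (√t) (Real.sqrt_pos.2 ht') 0 1 le_rfl
      rw [Real.sq_sqrt ht, mul_one, mul_zero] at this
      rw [this, mul_comm]
  have h0t : ∀ t, g 0 t = g 0 1 * √|t| := by
    intro t
    rcases le_total 0 t with h | h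
    · rw [abs_of_nonneg h, h0t' t h]
    · rw [abs_of_nonpos h, ← h0t' (-t) (by linarith), hneg 0 t le_rfl]
  have hz0 : horSq (0 : Fin n → ℝ) 0 = 0 := by simp [horSq]
  have hup : ∀ s t, 0 ≤ s → g s t ≤ g 1 0 * √s + g 0 1 * √|t| := by
    intro s t hs
    have := hNmul (fun _ => √(s / n), 0, 0) (0, 0, t)
    rw [← hs0 s hs, ← h0t t]
    rw [hgN 0 0 t, hz0] at this
    refine le_trans (le_of_eq ?_) this
    show ρ 0 _ = ρ 0 _
    simp [heisMul]
  have hlo1 : ∀ s t, 0 ≤ s → g 1 0 * √s ≤ g s t := by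
    intro s t hs
    have h1 := hNmul (fun _ => √(s / n), 0, t) (fun _ => √(s / n), 0, -t)
    have h2 : heisMul ((fun _ => √(s / n), 0, t) : Heis n) (fun _ => √(s / n), 0, -t)
        = (fun _ => 2 * √(s / n), 0, 0) := by
      refine Prod.ext ?_ (Prod.ext ?_ ?_)
      · ext j; simp [heisMul]; ring
      · simp [heisMul]
      · simp [heisMul]
    have h3 : horSq (fun _ : Fin n => 2 * √(s / n)) 0 = 2 ^ 2 * s := by
      have := horSq_smul 2 (fun _ : Fin n => √(s / n)) 0
      rw [hgsq s hs] at this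
      rw [← this, smul_zero]
      rfl
    rw [h2, hgN, h3] at h1
    have h4 := hhom 2 two_pos s 0 hs
    rw [mul_zero] at h4
    rw [h4, hs0 s hs] at h1
    have h5 := hneg s t hs
    change _ ≤ g s t + g s (-t) at h1
    linarith
  have hlo2 : ∀ s t, 0 ≤ s → g 0 1 * √|t| ≤ 2 * g s t := by
    intro s t hs
    have h1 := hNmul (fun _ => √(s / n), 0, t) (-(fun _ => √(s / n)), 0, 0)
    have h2 : heisMul ((fun _ => √(s / n), 0, t) : Heis n) (-(fun _ => √(s / n)), 0, 0)
        = (0, 0, t) := by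
      refine Prod.ext ?_ (Prod.ext ?_ ?_) <;> simp [heisMul]
    have h3 : horSq (-(fun _ : Fin n => √(s / n))) 0 = s := by
      have := horSq_smul (-1) (fun _ : Fin n => √(s / n)) 0
      rw [hgsq s hs] at this
      simpa using this
    rw [h2, hgN, hz0, h0t, hgN (-(fun _ => √(s / n))), h3, hs0 s hs] at h1
    change _ ≤ g s t + _ at h1
    linarith [hlo1 s t hs]
  have hcont : Continuous (fun p : Heis n => ρ 0 p) := by
    rw [continuous_iff_continuousAt]
    intro p
    have hb : ∀ q, ρ p q ≤ g 1 0 * √(horSq (q.1 - p.1) (q.2.1 - p.2.1)) + g 0 1 *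
        √|q.2.2 - p.2.2 - om (p.1, p.2.1) (q.1, q.2.1)| := fun q => by
      rw [hF p q]; exact hup _ _ (hsq0 _ _)
    have hc : Continuous (fun q : Heis n => g 1 0 * √(horSq (q.1 - p.1) (q.2.1 - p.2.1)) + g 0 1 *
        √|q.2.2 - p.2.2 - om (p.1, p.2.1) (q.1, q.2.1)|) := by
      unfold horSq om
      simp only [Pi.sub_apply]
      fun_prop
    have hlim := hc.tendsto p
    simp only [sub_self, hz0, om_self, Real.sqrt_zero, abs_zero, mul_zero, add_zero] at hlim
    rw [ContinuousAt, tendsto_iff_dist_tendsto_zero]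
    refine squeeze_zero (fun _ => dist_nonneg) (fun q => ?_) hlim
    refine le_trans ?_ (hb q)
    rw [Real.dist_eq, abs_le]
    have t1 := hρ_triangle 0 q p
    have t2 := hρ_triangle 0 p q
    rw [hρ_symm q p] at t1
    constructor <;> linarith
  refine ⟨g, g 1 0, g 0 1, ⟨?_, ?_, ?_, hhom, hlo1, hlo2, hup⟩, hF⟩
  · refine hcont.comp (f := fun p : ℝ × ℝ => ((fun _ => √(p.1 / n), 0, p.2) : Heis n)) ?_
    fun_prop
  · refine lt_of_le_of_ne (hg0 _ _) fun h => ?_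
    have := (hρ_zero _ _).1 h.symm
    have h1 := congrArg (fun p : Heis n => p.1 ⟨0, hn⟩) this
    have h2 : 0 < √(1 / (n : ℝ)) := by positivity
    exact h2.ne h1
  · refine lt_of_le_of_ne (hg0 _ _) fun h => ?_
    have := (hρ_zero _ _).1 h.symm
    have h1 := congrArg (fun p : Heis n => p.2.2) this
    exact zero_ne_one h1

/-- In the Heisenberg group `H^n` endowed with a rotationally invariant homogeneous
distance `ρ`, for each `1 ≤ k ≤ n` there is a constant `c(n,k) > 0` such that for every
vertical subgroup `P ∈ 𝒯_{H^n, ℝ^k}` (that is, `P = P₀ × V₂` with `P₀` a `(2n-k)`-dimensional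
subspace of the horizontal layer) one has
`c(n,k) · S^(2n+2-k) ⌞ P = H_E^(2n+1-k) ⌞ P`,
where `H_E` is the Euclidean Hausdorff measure on `ℝ^(2n+1) ≅ H^n`. -/
theorem spherical_eq_euclidean_hausdorff_on_vertical_subgroups
    (n k : ℕ) (hk : 1 ≤ k) (hkn : k ≤ n)
    (ρ : Heis n → Heis n → ℝ)
    (hρ_zero : ∀ p q : Heis n, ρ p q = 0 ↔ p = q)
    (hρ_symm : ∀ p q : Heis n, ρ p q = ρ q p)
    (hρ_triangle : ∀ p q r : Heis n, ρ p r ≤ ρ p q + ρ q r)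
    (hρ_left : ∀ g p q : Heis n, ρ (heisMul g p) (heisMul g q) = ρ p q)
    (hρ_hom : ∀ lam : ℝ, 0 < lam → ∀ p q : Heis n,
      ρ (heisDil lam p) (heisDil lam q) = lam * ρ p q)
    (hρ_rot : ∀ (x y x' y' : Fin n → ℝ) (t : ℝ), horSq x y = horSq x' y' →
      ρ 0 (x, y, t) = ρ 0 (x', y', t)) :
    ∃ c : ℝ≥0∞, 0 < c ∧ c < ⊤ ∧
      ∀ P₀ : Submodule ℝ ((Fin n → ℝ) × (Fin n → ℝ)),
        Module.finrank ℝ P₀ = 2 * n - k →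
        ∀ E : Set (Heis n),
          c * sphMeasFun ρ (2 * (n : ℝ) + 2 - k)
              (E ∩ {p : Heis n | (p.1, p.2.1) ∈ P₀}) =
            hausMeasFun heisEuclDist (2 * (n : ℝ) + 1 - k)
              (E ∩ {p : Heis n | (p.1, p.2.1) ∈ P₀}) := by
  obtain ⟨g, a, b, hg, hF⟩ := gmain n (hk.trans hkn) ρ hρ_zero hρ_symm hρ_triangle hρ_left
    hρ_hom hρ_rot
  obtain ⟨m, hm⟩ : ∃ m, m = 2 * n - k := ⟨_, rfl⟩
  obtain ⟨κ, hκ0, hκt, hκ⟩ := haus_const m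
  have hQt := QQ_ne_top hg m
  have hQ0 : QQ g m ≠ 0 := fun h => MM_zero_pos hg m (le_zero_iff.1 (h ▸ MM_le_QQ g m 0 le_rfl))
  have h20 : (2 : ℝ≥0∞) ^ (m + 2) ≠ 0 := by simp
  have h2t : (2 : ℝ≥0∞) ^ (m + 2) ≠ ⊤ := by simp
  have hmR : (m : ℝ) = 2 * n - k := by
    rw [hm, Nat.cast_sub (by omega)]; push_cast; ring
  refine ⟨κ * (QQ g m / 2 ^ (m + 2)), ?_, ?_, ?_⟩
  · refine pos_iff_ne_zero.2 (mul_ne_zero hκ0 ?_)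
    rw [ENNReal.div_ne_zero]; exact ⟨hQ0, h2t⟩
  · exact (ENNReal.mul_ne_top hκt (ENNReal.div_ne_top hQt h20)).lt_top
  intro P₀ hP E
  obtain ⟨J, hJP, hJn, hJ1, hJ2⟩ := geom n k hk hkn P₀ m hm (hP.trans hm.symm)
  have hJc : Continuous J := J.continuous_of_finiteDimensional
  let i : EX m → Heis n := fun q => ((J q.1).1, (J q.1).2, q.2)
  have hlc : ∀ (s : ℝ) (w : (Fin n → ℝ) × (Fin n → ℝ)),
      Continuous (fun v : EuclideanSpace ℝ (Fin m) => s + om w (J v)) := by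
    intro s w
    unfold om
    fun_prop
  have hρi : ∀ (w : (Fin n → ℝ) × (Fin n → ℝ)) (s : ℝ) (q : EX m), ρ (w.1, w.2, s) (i q)
      = g (horSq (J q.1 - w).1 (J q.1 - w).2) (q.2 - (s + om w (J q.1))) := by
    intro w s q
    rw [hF, ← sub_sub]
    rfl
  have hset : E ∩ {p : Heis n | (p.1, p.2.1) ∈ P₀} = i '' (i ⁻¹' E) := by
    ext p
    constructor
    · rintro ⟨hpE, hpP⟩
      obtain ⟨v, hv⟩ := (hJP _).1 hpP
      have e : i (v, p.2.2) = p := by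
        show ((J v).1, (J v).2, p.2.2) = p
        rw [hv]
      exact ⟨(v, p.2.2), by rw [mem_preimage, e]; exact hpE, e⟩
    · rintro ⟨q, hq, rfl⟩
      exact ⟨hq, (hJP _).2 ⟨q.1, rfl⟩⟩
  have hcore := core ρ (fun p => (hρ_zero p p).2 rfl) hρ_symm hρ_triangle m hg i
    (by
      intro z
      obtain ⟨x, w', hw, hw'⟩ := hJ1 (z.1, z.2.1)
      refine ⟨x, horSq w'.1 w'.2, fun v => z.2.2 + om (z.1, z.2.1) (J v),
        Finset.sum_nonneg fun i _ => by positivity, hlc _ _, fun q => ?_⟩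
      have h := hρi (z.1, z.2.1) z.2.2 q
      have e : J q.1 - (z.1, z.2.1) = J (q.1 - x) - w' := by
        rw [hw, map_sub]; abel
      rw [e, hw'] at h
      exact h)
    (by
      intro x
      refine ⟨fun v => x.2 + om (J x.1) (J v), hlc _ _, by simp [om_self], fun q => ?_⟩
      have h := hρi (J x.1) x.2 q
      rw [← map_sub, hJn] at h
      exact h)
    (by
      intro x β hβ
      obtain ⟨w', hw1, hw2⟩ := hJ2 β hβ
      refine ⟨((J x.1 + w').1, (J x.1 + w').2, x.2 + om (J x.1) w'),
        fun v => (x.2 + om (J x.1) w') + om (J x.1 + w') (J v), hlc _ _, ?_, fun q => ?_⟩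
      · rw [hF]
        congr 1
        · rw [← hw1]
          simp [i]
        · have := om_add (J x.1) (J x.1) w'
          rw [om_self, zero_add] at this
          show x.2 + om (J x.1) w' - x.2 - om (J x.1) (J x.1 + w') = 0
          rw [this]; ring
      · rw [hρi, ← sub_sub, ← map_sub, hw2, hw1])
    (i ⁻¹' E)
  have hH := aux_haus (heisEuclDist (n := n))
    (fun y : WithLp 2 (EuclideanSpace ℝ (Fin m) × ℝ) => i y.ofLp)
    (by
      intro p q
      rw [edist_dist]
      congr 1
      rw [WithLp.prod_dist_eq_of_L2, heisEuclDist]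
      congr 1
      have h1 := hJn (p.fst - q.fst)
      rw [dist_eq_norm p.fst, ← h1, Real.dist_eq, sq_abs, map_sub, horSq, Finset.sum_add_distrib]
      rfl)
    ((m + 1 : ℕ) : ℝ) (by positivity) (WithLp.ofLp ⁻¹' (i ⁻¹' E))
  rw [hκ] at hH
  have himg : (fun y : WithLp 2 (EuclideanSpace ℝ (Fin m) × ℝ) => i y.ofLp) ''
      (WithLp.ofLp ⁻¹' (i ⁻¹' E)) = i '' (i ⁻¹' E) := by
    ext p
    constructor
    · rintro ⟨y, hy, rfl⟩
      exact ⟨y.ofLp, hy, rfl⟩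
    · rintro ⟨q, hq, rfl⟩
      exact ⟨WithLp.toLp 2 q, hq, rfl⟩
  rw [himg] at hH
  have d1 : 2 * (n : ℝ) + 2 - k = ((m + 2 : ℕ) : ℝ) := by push_cast; rw [hmR]; ring
  have d2 : 2 * (n : ℝ) + 1 - k = ((m + 1 : ℕ) : ℝ) := by push_cast; rw [hmR]; ring
  rw [hset, d1, d2, hH, mul_assoc, hcore]
end
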